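/- arXiv:2107.10450 — 2 statements merged into one kernel-verified Lean document; each statement's English description precedes it below -/
import Mathlib

section
/- Let $N(0,M)$ denote the centered Gaussian on $\mathbb{R}^p$ with covariance $M$ and $N(0,\sigma^2)$ the centered Gaussian on $\mathbb{R}$ with variance $\sigma^2$. Consider the batched node model: $M = LL^\top \in \mathbb{R}^{p\times p}$ is positive definite with $1 \le p \le d$, $A \in \mathbb{R}^p$, $\sigma_y > 0$; for $s = 1,\dots,b$, batch $s$ consists of a design matrix $X^{(s)} \in \mathbb{R}^{k\times p}$ with rows i.i.d. $N(0,M)$ and a noise vector $\eta^{(s)} \in \mathbb{R}^k$ with i.i.d. $N(0,\sigma_y^2)$ entries, all batches and noises mutually independent; let $\tilde A^{(s)} = ((X^{(s)})^\top X^{(s)})^{-1}(X^{(s)})^\top(X^{(s)}A + \eta^{(s)})$ be the batch least-squares solution, $\hat A = \frac1b\sum_{s=1}^b \tilde A^{(s)}$, and $\Delta = \hat A - A$. There exist universal constants $C_k, C_{kb} > 0$ such that for all reals $n \ge 1$, $d_{avg} > 0$ and $\varepsilon, \delta \in (0,1)$: if $k \ge C_k\,\bigl(p + \ln\frac{n}{\varepsilon\delta}\bigr)$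 and $k b \ge C_{kb}\cdot\frac{n\, d_{avg}}{\varepsilon}\,\bigl(d + \ln\frac{n}{\varepsilon\delta}\bigr)$, then $$\Pr\Bigl( |\Delta^\top M \Delta| \le \sigma_y^2\cdot\frac{\varepsilon\, p}{n\, d_{avg}} \Bigr) \ge 1 - \delta .$$ -/
open MeasureTheory ProbabilityTheory Matrix

/-- Designs of the `b` batches: `X s r` is the `r`-th row (a vector of `ℝ^p`) of the `k × p`
design matrix of batch `s`. -/
abbrev BatchDesigns (p k b : ℕ) : Type := Fin b → Fin k → EuclideanSpace ℝ (Fin p)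

/-- Noises of the `b` batches: `η s r` is the `r`-th entry of the noise vector of batch `s`. -/
abbrev BatchNoises (k b : ℕ) : Type := Fin b → Fin k → ℝ

/-- Joint law of designs and noises: all rows are i.i.d. `N(0, M)`, all noise entries are i.i.d.
`N(0, σ²)`, and everything is mutually independent. -/
noncomputable def batchLaw {p : ℕ} (k b : ℕ) (M : Matrix (Fin p) (Fin p) ℝ) (σ : ℝ) :
    Measure (BatchDesigns p k b × BatchNoises k b) :=
  (Measure.pi fun _ : Fin b => Measure.pi fun _ : Fin k => multivariateGaussian 0 M).prod
    (Measure.pi fun _ : Fin b => Measure.pi fun _ : Fin k => gaussianReal 0 (σ ^ 2).toNNReal)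

/-- The `k × p` design matrix whose rows are the given vectors. -/
def designMatrix {p k : ℕ} (x : Fin k → EuclideanSpace ℝ (Fin p)) : Matrix (Fin k) (Fin p) ℝ :=
  Matrix.of fun r j => x r j

/-- The least-squares solution `(XᵀX)⁻¹ Xᵀ B`. -/
noncomputable def leastSquares {p k : ℕ} (X : Matrix (Fin k) (Fin p) ℝ) (B : Fin k → ℝ) :
    Fin p → ℝ :=
  (Xᵀ * X)⁻¹ *ᵥ (Xᵀ *ᵥ B)

/-- The average `(1/b) ∑ₛ Ã⁽ˢ⁾` of the batch least-squares solutions, where batch `s` has design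
matrix `X⁽ˢ⁾` and responses `X⁽ˢ⁾ A + η⁽ˢ⁾`. -/
noncomputable def batchAvgLeastSquares {p k b : ℕ} (A : Fin p → ℝ)
    (ω : BatchDesigns p k b × BatchNoises k b) : Fin p → ℝ :=
  (1 / (b : ℝ)) • ∑ s, leastSquares (designMatrix (ω.1 s)) (designMatrix (ω.1 s) *ᵥ A + ω.2 s)

/-- The moment of order `-1/2` of the absolute value of a standard real Gaussian. -/
noncomputable def gaussianNegHalfMoment : ENNReal :=
  ∫⁻ x, (‖x‖ₑ ^ (1 / 2 : ℝ))⁻¹ ∂(gaussianReal 0 1)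

lemma integrable_abs_rpow_mul_exp_neg_mul_sq {c s : ℝ} (hc : 0 < c) (hs : -1 < s) :
    Integrable fun x : ℝ => |x| ^ s * Real.exp (-c * x ^ 2) := by
  have h1 : IntegrableOn (fun x : ℝ => |x| ^ s * Real.exp (-c * x ^ 2)) (Set.Ioi 0) :=
    (integrableOn_rpow_mul_exp_neg_mul_sq hc hs).congr_fun
      (fun x hx => by simp only [abs_of_pos (Set.mem_Ioi.1 hx)]) measurableSet_Ioi
  have h2 : IntegrableOn (fun x : ℝ => |x| ^ s * Real.exp (-c * x ^ 2)) (Set.Iio 0) := by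
    have h := ((Measure.measurePreserving_neg (volume : Measure ℝ)).integrableOn_comp_preimage
      (Homeomorph.neg ℝ).measurableEmbedding (s := Set.Ioi 0)).2 h1
    simpa [Function.comp_def] using h
  have h3 : IntegrableOn (fun x : ℝ => |x| ^ s * Real.exp (-c * x ^ 2)) {0}ᶜ := by
    rw [← Set.Iio_union_Ioi]
    exact h2.union h1
  rwa [integrableOn_congr_set_ae (Filter.eventuallyEq_univ.2 (by simp [mem_ae_iff])),
    integrableOn_univ] at h3

lemma gaussianNegHalfMoment_ne_top : gaussianNegHalfMoment ≠ ⊤ := by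
  have hint := (integrable_abs_rpow_mul_exp_neg_mul_sq (c := 1 / 2) (s := -(1 / 2)) (by norm_num)
    (by norm_num)).const_mul (√(2 * Real.pi))⁻¹
  rw [gaussianNegHalfMoment, gaussianReal_of_var_ne_zero _ one_ne_zero,
    lintegral_withDensity_eq_lintegral_mul _ (measurable_gaussianPDF 0 1) (by fun_prop)]
  refine ne_of_lt (lt_of_le_of_lt (lintegral_mono_ae ?_) hint.2)
  filter_upwards [Measure.ae_ne volume (0 : ℝ)] with x hx
  have hx' : 0 < |x| := abs_pos.2 hx
  have : (‖x‖ₑ ^ (1 / 2 : ℝ))⁻¹ = ENNReal.ofReal (|x| ^ (-(1 / 2) : ℝ)) := by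
    rw [← ENNReal.rpow_neg, ← ENNReal.ofReal_rpow_of_pos hx', Real.enorm_eq_ofReal_abs]
  rw [Pi.mul_apply, this, gaussianPDF, ← ENNReal.ofReal_mul (gaussianPDFReal_nonneg _ _ _),
    Real.enorm_eq_ofReal_abs]
  refine ENNReal.ofReal_le_ofReal (le_trans (le_of_eq ?_) (le_abs_self _))
  simp only [gaussianPDFReal, NNReal.coe_one, mul_one, sub_zero]
  rw [show -(1 / 2 : ℝ) * x ^ 2 = -x ^ 2 / 2 by ring]
  ring

lemma lintegral_rpow_le_rpow_lintegral {α : Type*} {mα : MeasurableSpace α} {μ : Measure α}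
    [IsProbabilityMeasure μ] {f : α → ENNReal} (hf : AEMeasurable f μ) {r : ℝ} (hr : 0 < r)
    (hr1 : r ≤ 1) : ∫⁻ x, f x ^ r ∂μ ≤ (∫⁻ x, f x ∂μ) ^ r := by
  have h := eLpNorm'_le_eLpNorm'_of_exponent_le hr hr1 μ hf.aestronglyMeasurable
  simp only [eLpNorm', enorm_eq_self, ENNReal.rpow_one, div_one] at h
  have h2 := ENNReal.rpow_le_rpow h hr.le
  rwa [← ENNReal.rpow_mul, one_div, inv_mul_cancel₀ hr.ne', ENNReal.rpow_one] at h2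

lemma lintegral_pi_prod {ι : Type*} [Fintype ι] {X : ι → Type*} {mX : ∀ i, MeasurableSpace (X i)}
    {μ : ∀ i, Measure (X i)} [∀ i, IsProbabilityMeasure (μ i)] (s : Finset ι)
    {f : ∀ i, X i → ENNReal} (hf : ∀ i, Measurable (f i)) :
    ∫⁻ x, ∏ i ∈ s, f i (x i) ∂(Measure.pi μ) = ∏ i ∈ s, ∫⁻ y, f i y ∂(μ i) := by
  rw [lintegral_prod_eq_prod_lintegral_of_indepFun s (fun i (x : ∀ i, X i) => f i (x i))
    (iIndepFun_pi (X := f) fun i => (hf i).aemeasurable) (fun i => (hf i).comp (measurable_pi_apply i))]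
  refine Finset.prod_congr rfl fun i _ => ?_
  exact (measurePreserving_eval μ i).lintegral_comp (hf i)

lemma inv_sum_sq_pow_le {ι : Type*} (s : Finset ι) (hs : s.Nonempty) (x : ι → ℝ) (q : ℕ) :
    ((∑ i ∈ s, ‖x i‖ₑ ^ 2)⁻¹) ^ q ≤
      ((s.card : ENNReal)⁻¹) ^ q * ∏ i ∈ s, ((‖x i‖ₑ ^ (1 / 2 : ℝ))⁻¹) ^ (4 * q / s.card : ℝ) := by
  have hm : (0 : ℝ) < s.card := by exact_mod_cast hs.card_pos
  have amgm : ∏ i ∈ s, ‖x i‖ₑ ^ (2 / s.card : ℝ) ≤ (s.card : ENNReal)⁻¹ * ∑ i ∈ s, ‖x i‖ₑ ^ 2 := by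
    have h := NNReal.geom_mean_le_arith_mean_weighted s (fun _ => (s.card : NNReal)⁻¹)
      (fun i => ‖x i‖₊ ^ 2) (by
        simp only [Finset.sum_const, nsmul_eq_mul]
        exact mul_inv_cancel₀ (by exact_mod_cast hs.card_pos.ne'))
    rw [← Finset.mul_sum] at h
    have h' := ENNReal.coe_le_coe.2 h
    have hc : (s.card : NNReal) ≠ 0 := by exact_mod_cast hs.card_pos.ne'
    simp only [ENNReal.coe_mul, ENNReal.coe_inv hc, ENNReal.coe_natCast] at h'
    push_cast at h'
    refine le_trans (le_of_eq (Finset.prod_congr rfl fun i _ => ?_)) h'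
    rw [ENNReal.coe_rpow_of_nonneg _ (by positivity), ENNReal.coe_pow, ← enorm_eq_nnnorm,
      ← ENNReal.rpow_natCast, ← ENNReal.rpow_mul]
    congr 1
  have hprod : ∏ i ∈ s, ((‖x i‖ₑ ^ (1 / 2 : ℝ))⁻¹) ^ (4 * q / s.card : ℝ) =
      ((∏ i ∈ s, ‖x i‖ₑ ^ (2 / s.card : ℝ))⁻¹) ^ q := by
    rw [ENNReal.prod_inv_distrib fun i _ j _ _ =>
      Or.inr (ENNReal.rpow_ne_top_of_nonneg (by positivity) enorm_ne_top), ← Finset.prod_pow]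
    refine Finset.prod_congr rfl fun i _ => ?_
    rw [← ENNReal.rpow_neg, ← ENNReal.rpow_neg, ← ENNReal.rpow_natCast, ← ENNReal.rpow_mul,
      ← ENNReal.rpow_mul]
    congr 1
    ring
  rw [hprod, ← mul_pow]
  gcongr
  have hc0 : (s.card : ENNReal) ≠ 0 := by exact_mod_cast hs.card_pos.ne'
  calc (∑ i ∈ s, ‖x i‖ₑ ^ 2)⁻¹
      = (s.card : ENNReal)⁻¹ * ((s.card : ENNReal)⁻¹ * ∑ i ∈ s, ‖x i‖ₑ ^ 2)⁻¹ := by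
        rw [ENNReal.mul_inv (Or.inl (by simp)) (Or.inl (by simpa using hc0)), inv_inv, ← mul_assoc,
          ENNReal.inv_mul_cancel hc0 (by simp), one_mul]
    _ ≤ _ := by gcongr

lemma lintegral_inv_sum_sq_pow_le {ι : Type*} [Fintype ι] (s : Finset ι) {q : ℕ} (hq : 0 < q)
    (hs : 4 * q ≤ s.card) :
    ∫⁻ x : ι → ℝ, ((∑ i ∈ s, ‖x i‖ₑ ^ 2)⁻¹) ^ q ∂(Measure.pi fun _ => gaussianReal 0 1) ≤
      ((s.card : ENNReal)⁻¹ * gaussianNegHalfMoment ^ 4) ^ q := by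
  have hm : 0 < s.card := by omega
  have hm' : (0 : ℝ) < s.card := by exact_mod_cast hm
  refine (lintegral_mono fun x => inv_sum_sq_pow_le s (Finset.card_pos.1 hm) x q).trans ?_
  rw [lintegral_const_mul _ (by fun_prop), mul_pow, lintegral_pi_prod s (f := fun _ y =>
    ((‖y‖ₑ ^ (1 / 2 : ℝ))⁻¹) ^ (4 * q / s.card : ℝ)) (fun _ => by fun_prop)]
  gcongr
  rw [Finset.prod_const]
  calc _ ≤ (gaussianNegHalfMoment ^ (4 * q / s.card : ℝ)) ^ s.card := by
        gcongr
        refine lintegral_rpow_le_rpow_lintegral (by fun_prop) (by positivity) ?_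
        rw [div_le_one hm']
        exact_mod_cast hs
    _ = _ := by
        rw [← ENNReal.rpow_natCast, ← ENNReal.rpow_mul, div_mul_cancel₀ _ hm'.ne', ← pow_mul,
          ← ENNReal.rpow_natCast]
        push_cast
        rfl

open scoped RealInnerProductSpace in
lemma exists_orthonormalBasis_finset_mem {k : ℕ} (U : Submodule ℝ (EuclideanSpace ℝ (Fin k))) :
    ∃ (e : OrthonormalBasis (Fin k) ℝ (EuclideanSpace ℝ (Fin k))) (s : Finset (Fin k)),
      s.card = Module.finrank ℝ U ∧ ∀ i ∈ s, e i ∈ U := by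
  have hm : Module.finrank ℝ U ≤ k := by simpa using U.finrank_le
  let v : Fin k → EuclideanSpace ℝ (Fin k) := fun i =>
    if h : (i : ℕ) < Module.finrank ℝ U then stdOrthonormalBasis ℝ U ⟨i, h⟩ else 0
  let s : Finset (Fin k) := Finset.univ.filter fun i => (i : ℕ) < Module.finrank ℝ U
  have hv : Orthonormal ℝ ((s : Set (Fin k)).domRestrict v) := by
    have h := ((stdOrthonormalBasis ℝ U).orthonormal.comp_linearIsometry U.subtypeₗᵢ).comp
      (fun i : (s : Set (Fin k)) => ⟨(i : Fin k), by simpa [s] using i.2⟩)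
      (fun i j hij => Subtype.ext (Fin.ext (Fin.mk.inj hij)))
    convert h using 1
    ext1 i
    have hi : ((i : Fin k) : ℕ) < Module.finrank ℝ U := by simpa [s] using i.2
    simp [v, hi]
  obtain ⟨e, he⟩ := hv.exists_orthonormalBasis_extension_of_card_eq (by simp)
  refine ⟨e, s, ?_, fun i hi => ?_⟩
  · simp only [s]
    rw [Fin.card_filter_val_lt, min_eq_right hm]
  · rw [he i hi]
    have hi : (i : ℕ) < Module.finrank ℝ U := by simpa [s] using hi
    simp [v, hi]

open scoped RealInnerProductSpace in
/-- Negative moments of the norm of the projection of a standard Gaussian vector on a subspace. -/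
lemma lintegral_inv_norm_starProjection_sq_pow_le {k : ℕ}
    (U : Submodule ℝ (EuclideanSpace ℝ (Fin k))) {q : ℕ} (hq : 0 < q)
    (hU : 4 * q ≤ Module.finrank ℝ U) :
    ∫⁻ z : Fin k → ℝ, ((‖U.starProjection (WithLp.toLp 2 z)‖ₑ ^ 2)⁻¹) ^ q
        ∂(Measure.pi fun _ => gaussianReal 0 1) ≤
      ((Module.finrank ℝ U : ENNReal)⁻¹ * gaussianNegHalfMoment ^ 4) ^ q := by
  obtain ⟨e, s, hs, he⟩ := exists_orthonormalBasis_finset_mem U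
  have hmeas : Measurable fun z : EuclideanSpace ℝ (Fin k) =>
      ((‖U.starProjection z‖ₑ ^ 2)⁻¹) ^ q := by fun_prop
  rw [← lintegral_map (f := fun z => ((‖U.starProjection z‖ₑ ^ 2)⁻¹) ^ q) hmeas
    (by fun_prop : Measurable (WithLp.toLp 2)),
    map_pi_eq_stdGaussian, stdGaussian_eq_map_pi_orthonormalBasis e,
    lintegral_map hmeas (by fun_prop), ← hs]
  refine le_trans (lintegral_mono fun x => ?_) (lintegral_inv_sum_sq_pow_le s hq (hs ▸ hU))
  dsimp only
  gcongr
  set z := ∑ i, x i • e i with hz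
  have hcoord : ∀ i ∈ s, ⟪e i, U.starProjection z⟫ = x i := fun i hi => by
    rw [← U.inner_starProjection_left_eq_right, U.starProjection_eq_self_iff.2 (he i hi), hz,
      e.orthonormal.inner_right_fintype]
  have hb := e.orthonormal.sum_inner_products_le (U.starProjection z) (s := s)
  rw [Finset.sum_congr rfl fun i hi => by rw [hcoord i hi]] at hb
  have h1 : ∀ t : ℝ, ‖t‖ₑ ^ 2 = ENNReal.ofReal (‖t‖ ^ 2) := fun t => by
    rw [ENNReal.ofReal_pow (norm_nonneg _), ofReal_norm]
  rw [← ofReal_norm, ← ENNReal.ofReal_pow (norm_nonneg _), Finset.sum_congr rfl fun i _ => h1 _,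
    ← ENNReal.ofReal_sum_of_nonneg fun i _ => by positivity]
  exact ENNReal.ofReal_le_ofReal hb

/-- The pseudo-inverse `(ZᵀZ)⁻¹ Zᵀ` of a design matrix. -/
noncomputable def leastSquaresMatrix {p k : ℕ} (Z : Matrix (Fin k) (Fin p) ℝ) :
    Matrix (Fin p) (Fin k) ℝ :=
  (Zᵀ * Z)⁻¹ * Zᵀ

/-- The law of a `k × p` matrix with independent standard Gaussian entries. -/
noncomputable abbrev stdGaussianMatrix (k p : ℕ) : Measure (Fin k → Fin p → ℝ) :=
  Measure.pi fun _ => Measure.pi fun _ => gaussianReal 0 1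

lemma measurable_leastSquaresMatrix {p k : ℕ} (j : Fin p) (r : Fin k) :
    Measurable fun z : Fin k → Fin p → ℝ => leastSquaresMatrix (Matrix.of z) j r := by
  have hdet : Measurable fun z : Fin k → Fin p → ℝ => ((Matrix.of z)ᵀ * Matrix.of z).det := by
    apply Continuous.measurable
    apply Continuous.matrix_det
    exact Continuous.matrix_mul (Continuous.matrix_transpose continuous_id) continuous_id
  have hadj : ∀ i, Measurable fun z : Fin k → Fin p → ℝ =>
      ((Matrix.of z)ᵀ * Matrix.of z).adjugate j i := fun i => by
    apply Continuous.measurable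
    refine Continuous.matrix_elem (Continuous.matrix_adjugate ?_) j i
    exact Continuous.matrix_mul (Continuous.matrix_transpose continuous_id) continuous_id
  simp only [leastSquaresMatrix, Matrix.mul_apply, Matrix.inv_def, Matrix.smul_apply,
    Ring.inverse_eq_inv', smul_eq_mul, Matrix.transpose_apply, Matrix.of_apply]
  refine Finset.measurable_sum _ fun i _ => ((hdet.inv.mul (hadj i)).mul ?_)
  fun_prop

/-- The span of the columns of a matrix. -/
def columnSpan {k p : ℕ} (R : Fin k → Fin p → ℝ) : Submodule ℝ (EuclideanSpace ℝ (Fin k)) :=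
  Submodule.span ℝ (Set.range fun i : Fin p => WithLp.toLp 2 fun r => R r i)

lemma le_finrank_orthogonal_columnSpan {k p : ℕ} (R : Fin k → Fin p → ℝ) :
    k - p ≤ Module.finrank ℝ (columnSpan R)ᗮ := by
  have h1 := (columnSpan R).finrank_add_finrank_orthogonal
  have h2 : Module.finrank ℝ (columnSpan R) ≤ p := by
    have h := finrank_range_le_card (R := ℝ)
      fun i : Fin p => (WithLp.toLp 2 fun r => R r i : EuclideanSpace ℝ (Fin k))
    rwa [Fintype.card_fin] at h
  rw [finrank_euclideanSpace_fin] at h1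
  omega

open scoped RealInnerProductSpace in
lemma sum_sq_leastSquaresMatrix_le {k p : ℕ} (j : Fin (p + 1)) (c : Fin k → ℝ)
    (R : Fin k → Fin p → ℝ) :
    ENNReal.ofReal (∑ r, leastSquaresMatrix
        (Matrix.of fun r => (j.insertNth (c r) (R r) : Fin (p + 1) → ℝ)) j r ^ 2) ≤
      (‖(columnSpan R)ᗮ.starProjection (WithLp.toLp 2 c)‖ₑ ^ 2)⁻¹ := by
  set Z : Matrix (Fin k) (Fin (p + 1)) ℝ :=
    Matrix.of fun r => (j.insertNth (c r) (R r) : Fin (p + 1) → ℝ) with hZ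
  by_cases hdet : IsUnit (Zᵀ * Z).det
  swap
  · simp [leastSquaresMatrix, Matrix.nonsing_inv_apply_not_isUnit _ hdet]
  have hHZ : leastSquaresMatrix Z * Z = 1 := by
    rw [leastSquaresMatrix, Matrix.mul_assoc, Matrix.nonsing_inv_mul _ hdet]
  let w : EuclideanSpace ℝ (Fin k) := WithLp.toLp 2 fun r => leastSquaresMatrix Z j r
  let col : Fin (p + 1) → EuclideanSpace ℝ (Fin k) := fun i => WithLp.toLp 2 fun r => Z r i
  have hcolj : col j = WithLp.toLp 2 c := by ext r; simp [col, hZ]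
  have hcol : ∀ i, col (j.succAbove i) = WithLp.toLp 2 fun r => R r i := fun i => by
    ext r; simp [col, hZ]
  have hin : ∀ i, ⟪col i, w⟫ = (1 : Matrix (Fin (p + 1)) (Fin (p + 1)) ℝ) j i := fun i => by
    rw [← hHZ, Matrix.mul_apply]
    simp [col, w, PiLp.inner_apply]
  set U := (columnSpan R)ᗮ with hU
  have hwU : w ∈ U := by
    rw [hU, columnSpan, Submodule.mem_orthogonal]
    intro u hu
    induction hu using Submodule.span_induction with
    | mem x hx =>
      obtain ⟨i, rfl⟩ := hx
      dsimp only
      rw [← hcol i, hin, Matrix.one_apply_ne (j.succAbove_ne i).symm]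
    | zero => simp
    | add x y _ _ hx hy => rw [inner_add_left, hx, hy, add_zero]
    | smul a x _ hx => rw [real_inner_smul_left, hx, mul_zero]
  let g : Fin (p + 1) → ℝ := fun i => (Zᵀ * Z)⁻¹ j i
  have hw : w = ∑ i, g i • col i := by
    ext r
    simp [w, g, col, leastSquaresMatrix, Matrix.mul_apply]
  have hP : w = g j • U.starProjection (col j) := by
    have h0 : ∀ i, U.starProjection (col (j.succAbove i)) = 0 := fun i => by
      rw [Submodule.starProjection_apply_eq_zero_iff, hU, Submodule.orthogonal_orthogonal, hcol]
      exact Submodule.subset_span ⟨i, rfl⟩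
    calc w = U.starProjection w := (U.starProjection_eq_self_iff.2 hwU).symm
      _ = g j • U.starProjection (col j) := by
        rw [hw, map_sum, Fin.sum_univ_succAbove _ j]
        simp [h0]
  have hww : ⟪w, w⟫ = g j := by
    conv_lhs => rw [hw, sum_inner]
    rw [Finset.sum_congr rfl fun i _ => by rw [hw.symm, real_inner_smul_left, hin]]
    simp [Matrix.one_apply]
  have hone : g j * ‖U.starProjection (col j)‖ ^ 2 = 1 := by
    have h1 := hin j
    rw [Matrix.one_apply_eq, ← U.starProjection_eq_self_iff.2 hwU,
      ← U.inner_starProjection_left_eq_right] at h1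
    conv_lhs at h1 => rw [hP]
    rwa [real_inner_smul_right, real_inner_self_eq_norm_sq] at h1
  have hsum : ∑ r, leastSquaresMatrix Z j r ^ 2 = g j := by
    rw [← hww, real_inner_self_eq_norm_sq, EuclideanSpace.real_norm_sq_eq]
  rw [hsum, ENNReal.le_inv_iff_mul_le, ← hcolj, ← ofReal_norm, ← ENNReal.ofReal_pow (norm_nonneg _),
    ← ENNReal.ofReal_mul, hone, ENNReal.ofReal_one]
  rw [← hww]
  exact real_inner_self_nonneg

lemma measurePreserving_insertNth_stdGaussianMatrix (k p : ℕ) (j : Fin (p + 1)) :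
    MeasurePreserving (fun x : (Fin k → ℝ) × (Fin k → Fin p → ℝ) =>
        fun r => (j.insertNth (x.1 r) (x.2 r) : Fin (p + 1) → ℝ))
      ((Measure.pi fun _ => gaussianReal 0 1).prod (stdGaussianMatrix k p))
      (stdGaussianMatrix k (p + 1)) := by
  have h1 := (measurePreserving_arrowProdEquivProdArrow ℝ (Fin p → ℝ) (Fin k)
    (fun _ => gaussianReal 0 1) (fun _ => Measure.pi fun _ => gaussianReal 0 1)).symm
  have h2 := measurePreserving_pi
    (fun _ : Fin k => (gaussianReal 0 1).prod (Measure.pi fun _ : Fin p => gaussianReal 0 1))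
    (fun _ => Measure.pi fun _ : Fin (p + 1) => gaussianReal 0 1) (fun _ =>
    (measurePreserving_piFinSuccAbove (fun _ : Fin (p + 1) => gaussianReal 0 1) j).symm)
  exact h2.comp h1

lemma lintegral_stdGaussianMatrix_insertNth {k p : ℕ} (j : Fin (p + 1))
    {Φ : (Fin k → Fin (p + 1) → ℝ) → ENNReal} (hΦ : Measurable Φ) :
    ∫⁻ z, Φ z ∂(stdGaussianMatrix k (p + 1)) =
      ∫⁻ R, ∫⁻ c, Φ (fun r => (j.insertNth (c r) (R r) : Fin (p + 1) → ℝ))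
        ∂(Measure.pi fun _ => gaussianReal 0 1) ∂(stdGaussianMatrix k p) := by
  have h := measurePreserving_insertNth_stdGaussianMatrix k p j
  rw [← h.lintegral_comp hΦ]
  exact lintegral_prod_symm' _ (hΦ.comp h.measurable)

lemma lintegral_sum_sq_leastSquaresMatrix_pow_le {k p q : ℕ} (hq : 0 < q) (hk : p + 4 * q ≤ k)
    (j : Fin (p + 1)) :
    ∫⁻ z, ENNReal.ofReal (∑ r, leastSquaresMatrix (Matrix.of z) j r ^ 2) ^ q
        ∂(stdGaussianMatrix k (p + 1)) ≤
      (((k - p : ℕ) : ENNReal)⁻¹ * gaussianNegHalfMoment ^ 4) ^ q := by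
  have hmeas : Measurable fun z : Fin k → Fin (p + 1) → ℝ =>
      ENNReal.ofReal (∑ r, leastSquaresMatrix (Matrix.of z) j r ^ 2) ^ q :=
    (Finset.measurable_sum _ fun r _ =>
      (measurable_leastSquaresMatrix j r).pow_const 2).ennreal_ofReal.pow_const q
  rw [lintegral_stdGaussianMatrix_insertNth j hmeas]
  calc _ ≤ ∫⁻ _, (((k - p : ℕ) : ENNReal)⁻¹ * gaussianNegHalfMoment ^ 4) ^ q
          ∂(stdGaussianMatrix k p) := by
        refine lintegral_mono fun R => ?_
        have hU := le_finrank_orthogonal_columnSpan R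
        refine (lintegral_mono fun c => pow_le_pow_left' (sum_sq_leastSquaresMatrix_le j c R) q).trans
          ((lintegral_inv_norm_starProjection_sq_pow_le _ hq (by omega)).trans ?_)
        gcongr
    _ = _ := by simp

lemma det_transpose_mul_self_ne_zero_of_starProjection_ne_zero {k p : ℕ} (c : Fin k → ℝ)
    (R : Fin k → Fin p → ℝ) (hR : ((Matrix.of R)ᵀ * Matrix.of R).det ≠ 0)
    (hc : (columnSpan R)ᗮ.starProjection (WithLp.toLp 2 c) ≠ 0) :
    ((Matrix.of fun r => (Fin.insertNth 0 (c r) (R r) : Fin (p + 1) → ℝ))ᵀ *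
      Matrix.of fun r => (Fin.insertNth 0 (c r) (R r) : Fin (p + 1) → ℝ)).det ≠ 0 := by
  intro h0
  obtain ⟨v, hv, hv0⟩ := Matrix.exists_mulVec_eq_zero_iff.2 h0
  rw [← Matrix.conjTranspose_eq_transpose_of_trivial,
    Matrix.conjTranspose_mul_self_mulVec_eq_zero] at hv0
  have hrow : ∀ r, c r * v 0 + ∑ i, R r i * v i.succ = 0 := fun r => by
    have := congrFun hv0 r
    simpa [Matrix.mulVec, dotProduct, Fin.sum_univ_succ] using this
  have hv00 : v 0 = 0 := by
    by_contra hne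
    apply hc
    rw [Submodule.starProjection_apply_eq_zero_iff, Submodule.orthogonal_orthogonal]
    have : WithLp.toLp 2 c = ∑ i, (-(v 0)⁻¹ * v (Fin.succ i)) •
        (WithLp.toLp 2 fun r => R r i : EuclideanSpace ℝ (Fin k)) := by
      ext r
      have h := hrow r
      simp only [WithLp.ofLp_sum, WithLp.ofLp_smul, Finset.sum_apply,
        Pi.smul_apply, smul_eq_mul]
      have h2 : ∑ i, -(v 0)⁻¹ * v (Fin.succ i) * R r i = -(v 0)⁻¹ * ∑ i, R r i * v i.succ := by
        rw [Finset.mul_sum]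
        exact Finset.sum_congr rfl fun i _ => by ring
      rw [h2, eq_neg_of_add_eq_zero_right h]
      field_simp
    rw [this]
    exact Submodule.sum_mem _ fun i _ => Submodule.smul_mem _ _ (Submodule.subset_span ⟨i, rfl⟩)
  apply hR
  refine Matrix.exists_mulVec_eq_zero_iff.1 ⟨fun i => v i.succ, fun h => hv ?_, ?_⟩
  · ext i
    refine Fin.cases hv00 (fun i => congrFun h i) i
  · rw [← Matrix.mulVec_mulVec]
    have : Matrix.of R *ᵥ (fun i => v (Fin.succ i)) = 0 := by
      ext r
      simpa [hv00, Matrix.mulVec, dotProduct] using hrow r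
    rw [this, Matrix.mulVec_zero]

lemma ae_starProjection_ne_zero {k : ℕ} (U : Submodule ℝ (EuclideanSpace ℝ (Fin k)))
    (hU : 4 ≤ Module.finrank ℝ U) :
    ∀ᵐ c ∂(Measure.pi fun _ : Fin k => gaussianReal 0 1),
      U.starProjection (WithLp.toLp 2 c) ≠ 0 := by
  have h := lintegral_inv_norm_starProjection_sq_pow_le U one_pos (by omega)
  have hm : (Module.finrank ℝ U : ENNReal) ≠ 0 := by
    have : Module.finrank ℝ U ≠ 0 := by omega
    exact_mod_cast this
  have hfin : ((Module.finrank ℝ U : ENNReal)⁻¹ * gaussianNegHalfMoment ^ 4) ^ 1 < ⊤ :=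
    ENNReal.pow_lt_top (ENNReal.mul_lt_top (by simpa [pos_iff_ne_zero] using hm)
      (ENNReal.pow_lt_top gaussianNegHalfMoment_ne_top.lt_top))
  filter_upwards [ae_lt_top (by fun_prop) (h.trans_lt hfin).ne] with c hc h0
  simp [h0] at hc

lemma ae_det_transpose_mul_self_ne_zero {k p : ℕ} (hk : p + 4 ≤ k) :
    ∀ᵐ z ∂(stdGaussianMatrix k p), ((Matrix.of z)ᵀ * Matrix.of z).det ≠ 0 := by
  induction p with
  | zero => simp
  | succ p ih =>
    have hmeas : MeasurableSet {z : Fin k → Fin (p + 1) → ℝ |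
        ¬ ((Matrix.of z)ᵀ * Matrix.of z).det ≠ 0} := by
      simp only [ne_eq, not_not]
      refine (IsClosed.measurableSet (isClosed_eq ?_ continuous_const))
      exact (Continuous.matrix_mul (Continuous.matrix_transpose continuous_id)
        continuous_id).matrix_det
    have h := measurePreserving_insertNth_stdGaussianMatrix k p 0
    rw [ae_iff, ← h.measure_preimage hmeas.nullMeasurableSet,
      Measure.prod_apply_symm (h.measurable hmeas)]
    refine (lintegral_congr_ae ?_).trans lintegral_zero
    filter_upwards [ih (by omega)] with R hR
    change (Measure.pi fun _ : Fin k => gaussianReal 0 1) {c | ¬ _} = 0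
    rw [← ae_iff]
    filter_upwards [ae_starProjection_ne_zero (columnSpan R)ᗮ
      (by have := le_finrank_orthogonal_columnSpan R; omega)] with c hc
    exact det_transpose_mul_self_ne_zero_of_starProjection_ne_zero c R hR hc

lemma lintegral_exp_mul_gaussianReal (v : NNReal) (t : ℝ) :
    ∫⁻ x, ENNReal.ofReal (Real.exp (t * x)) ∂(gaussianReal 0 v) =
      ENNReal.ofReal (Real.exp (v * t ^ 2 / 2)) := by
  rw [← ofReal_integral_eq_lintegral_ofReal (integrable_exp_mul_gaussianReal t)
    (Filter.Eventually.of_forall fun x => (Real.exp_pos _).le)]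
  congr 1
  have h := congrFun (mgf_fun_id_gaussianReal (μ := 0) (v := v)) t
  simpa [mgf] using h

/-- The law of the noises of all batches. -/
noncomputable abbrev noiseLaw (k b : ℕ) (v : NNReal) : Measure (BatchNoises k b) :=
  Measure.pi fun _ => Measure.pi fun _ => gaussianReal 0 v

lemma lintegral_exp_sum_noiseLaw {k b : ℕ} (v : NNReal) (a : Fin b → Fin k → ℝ) (t : ℝ) :
    ∫⁻ η, ENNReal.ofReal (Real.exp (t * ∑ s, ∑ r, a s r * η s r)) ∂(noiseLaw k b v) =
      ENNReal.ofReal (Real.exp (v * (∑ s, ∑ r, a s r ^ 2) * t ^ 2 / 2)) := by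
  have h1 : ∀ η : BatchNoises k b, ENNReal.ofReal (Real.exp (t * ∑ s, ∑ r, a s r * η s r)) =
      ∏ s, ∏ r, ENNReal.ofReal (Real.exp (t * a s r * η s r)) := fun η => by
    simp_rw [Finset.mul_sum, Real.exp_sum]
    rw [ENNReal.ofReal_prod_of_nonneg fun _ _ => Finset.prod_nonneg fun _ _ => (Real.exp_pos _).le]
    refine Finset.prod_congr rfl fun s _ => ?_
    rw [ENNReal.ofReal_prod_of_nonneg fun _ _ => (Real.exp_pos _).le]
    simp_rw [mul_assoc]
  simp_rw [h1]
  rw [lintegral_pi_prod Finset.univ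
    (f := fun s (y : Fin k → ℝ) => ∏ r, ENNReal.ofReal (Real.exp (t * a s r * y r)))
    (fun s => by fun_prop)]
  simp_rw [fun s => lintegral_pi_prod (μ := fun _ : Fin k => gaussianReal 0 v) Finset.univ
    (f := fun r (y : ℝ) => ENNReal.ofReal (Real.exp (t * a s r * y))) (fun r => by fun_prop),
    lintegral_exp_mul_gaussianReal]
  simp_rw [← ENNReal.ofReal_prod_of_nonneg fun _ _ => (Real.exp_pos _).le, ← Real.exp_sum]
  rw [← ENNReal.ofReal_prod_of_nonneg fun _ _ => (Real.exp_pos _).le, ← Real.exp_sum]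
  congr 2
  simp_rw [Finset.mul_sum, Finset.sum_mul, Finset.sum_div]
  exact Finset.sum_congr rfl fun _ _ => Finset.sum_congr rfl fun _ _ => by ring

lemma exp_neg_le_factorial_mul_inv_pow {x : ℝ} (hx : 0 < x) (q : ℕ) :
    Real.exp (-x) ≤ q.factorial * (x⁻¹) ^ q := by
  have h := Real.pow_div_factorial_le_exp x hx.le q
  have hq : (0 : ℝ) < q.factorial := by exact_mod_cast q.factorial_pos
  rw [Real.exp_neg, inv_pow, inv_le_comm₀ (Real.exp_pos _) (by positivity), mul_inv, inv_inv]
  calc _ = x ^ q / q.factorial := by ring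
    _ ≤ _ := h

lemma noiseLaw_le_sum_le {k b : ℕ} {v : NNReal} (hv : v ≠ 0) (a : Fin b → Fin k → ℝ) {τ : ℝ}
    (hτ : 0 < τ) (q : ℕ) :
    noiseLaw k b v {η | τ ≤ ∑ s, ∑ r, a s r * η s r} ≤
      ENNReal.ofReal (q.factorial * (2 * (v * ∑ s, ∑ r, a s r ^ 2) / τ ^ 2) ^ q) := by
  have hv' : (0 : ℝ) < v := by exact_mod_cast pos_iff_ne_zero.2 hv
  have hnn : 0 ≤ ∑ s, ∑ r, a s r ^ 2 :=
    Finset.sum_nonneg fun _ _ => Finset.sum_nonneg fun _ _ => sq_nonneg _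
  rcases hnn.eq_or_lt with h0 | hpos
  · have ha : ∀ s r, a s r = 0 := fun s r => by
      have h1 := (Finset.sum_eq_zero_iff_of_nonneg fun s _ =>
        Finset.sum_nonneg fun r _ => sq_nonneg (a s r)).1 h0.symm s (Finset.mem_univ _)
      have h2 := (Finset.sum_eq_zero_iff_of_nonneg fun r _ => sq_nonneg (a s r)).1 h1 r
        (Finset.mem_univ _)
      exact pow_eq_zero_iff two_ne_zero |>.1 h2
    have : {η : BatchNoises k b | τ ≤ ∑ s, ∑ r, a s r * η s r} = ∅ := by
      ext η
      simp [ha, hτ]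
    simp [this]
  set V : ℝ := v * ∑ s, ∑ r, a s r ^ 2 with hV
  have hVpos : 0 < V := mul_pos hv' hpos
  calc noiseLaw k b v {η | τ ≤ ∑ s, ∑ r, a s r * η s r}
      ≤ noiseLaw k b v {η | ENNReal.ofReal (Real.exp (τ / V * τ)) ≤
          ENNReal.ofReal (Real.exp (τ / V * ∑ s, ∑ r, a s r * η s r))} := by
        refine measure_mono fun η hη => ?_
        refine ENNReal.ofReal_le_ofReal (Real.exp_le_exp.2 ?_)
        exact mul_le_mul_of_nonneg_left hη (by positivity)
    _ ≤ (∫⁻ η, ENNReal.ofReal (Real.exp (τ / V * ∑ s, ∑ r, a s r * η s r)) ∂(noiseLaw k b v)) /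
          ENNReal.ofReal (Real.exp (τ / V * τ)) :=
        meas_ge_le_lintegral_div (Measurable.aemeasurable (by fun_prop)) (by simp [Real.exp_pos]) (by simp)
    _ = ENNReal.ofReal (Real.exp (-(τ ^ 2 / (2 * V)))) := by
        rw [lintegral_exp_sum_noiseLaw, ← hV, ← ENNReal.ofReal_div_of_pos (Real.exp_pos _),
          ← Real.exp_sub]
        congr 2
        field_simp
        ring
    _ ≤ _ := by
        refine ENNReal.ofReal_le_ofReal ((exp_neg_le_factorial_mul_inv_pow (by positivity) q).trans
          (le_of_eq ?_))
        rw [inv_div]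

/-- Polynomial tail bound for a linear combination of the noises. -/
lemma noiseLaw_le_abs_sum_le {k b : ℕ} {v : NNReal} (hv : v ≠ 0) (a : Fin b → Fin k → ℝ) {τ : ℝ}
    (hτ : 0 < τ) (q : ℕ) :
    noiseLaw k b v {η | τ ≤ |∑ s, ∑ r, a s r * η s r|} ≤
      2 * ENNReal.ofReal (q.factorial * (2 * (v * ∑ s, ∑ r, a s r ^ 2) / τ ^ 2) ^ q) := by
  have h1 := noiseLaw_le_sum_le hv a hτ q
  have h2 := noiseLaw_le_sum_le hv (fun s r => -a s r) hτ q
  simp only [neg_sq, neg_mul, Finset.sum_neg_distrib] at h2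
  rw [two_mul]
  refine (measure_mono fun η hη => ?_).trans
    ((measure_union_le _ _).trans (add_le_add h1 h2))
  exact le_abs.1 (show τ ≤ _ from hη)

lemma lintegral_pi_mean_pow_le {α : Type*} {mα : MeasurableSpace α} {μ : Measure α}
    [IsProbabilityMeasure μ] {f : α → ENNReal} (hf : Measurable f) {b q : ℕ} (hb : 0 < b)
    (hq : 0 < q) :
    ∫⁻ z, ((b : ENNReal)⁻¹ * ∑ s, f (z s)) ^ q ∂(Measure.pi fun _ : Fin b => μ) ≤
      ∫⁻ y, f y ^ q ∂μ := by
  have hb0 : (b : ENNReal) ≠ 0 := by exact_mod_cast hb.ne'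
  have hb1 : (b : ENNReal)⁻¹ * b = 1 := ENNReal.inv_mul_cancel hb0 (by simp)
  have hmean : ∀ z : Fin b → α, ((b : ENNReal)⁻¹ * ∑ s, f (z s)) ^ q ≤
      (b : ENNReal)⁻¹ * ∑ s, f (z s) ^ q := fun z => by
    have h := ENNReal.rpow_arith_mean_le_arith_mean_rpow Finset.univ
      (fun _ : Fin b => (b : ENNReal)⁻¹) (fun s => f (z s))
      (by simpa [mul_comm] using hb1) (p := q) (by exact_mod_cast hq)
    simpa only [← Finset.mul_sum, ENNReal.rpow_natCast] using h
  refine (lintegral_mono hmean).trans (le_of_eq ?_)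
  rw [lintegral_const_mul _ (by fun_prop), lintegral_finsetSum _ (fun s _ => by fun_prop)]
  have : ∀ s : Fin b, ∫⁻ z, f (z s) ^ q ∂(Measure.pi fun _ : Fin b => μ) = ∫⁻ y, f y ^ q ∂μ :=
    fun s => (measurePreserving_eval (fun _ : Fin b => μ) s).lintegral_comp (hf.pow_const q)
  simp_rw [this]
  rw [Finset.sum_const, Finset.card_univ, Fintype.card_fin, nsmul_eq_mul, ← mul_assoc, hb1, one_mul]

/-- The error of the averaged estimator in the whitened coordinates. -/
noncomputable def whitenedError {p k b : ℕ} (Z : Fin b → Fin k → Fin p → ℝ)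
    (η : BatchNoises k b) : Fin p → ℝ :=
  (1 / (b : ℝ)) • ∑ s, leastSquaresMatrix (Matrix.of (Z s)) *ᵥ η s

lemma whitenedError_apply {p k b : ℕ} (Z : Fin b → Fin k → Fin p → ℝ) (η : BatchNoises k b)
    (j : Fin p) : whitenedError Z η j =
      ∑ s, ∑ r, (1 / (b : ℝ) * leastSquaresMatrix (Matrix.of (Z s)) j r) * η s r := by
  simp only [whitenedError, Pi.smul_apply, Finset.sum_apply, smul_eq_mul, Matrix.mulVec,
    dotProduct, Finset.mul_sum, mul_assoc]

lemma measurable_whitenedError {p k b : ℕ} (j : Fin p) :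
    Measurable fun x : (Fin b → Fin k → Fin p → ℝ) × BatchNoises k b =>
      whitenedError x.1 x.2 j := by
  simp_rw [whitenedError_apply]
  refine Finset.measurable_sum _ fun s _ => Finset.measurable_sum _ fun r _ => ?_
  refine Measurable.mul (((measurable_leastSquaresMatrix j r).comp ?_).const_mul _) ?_ <;> fun_prop

lemma measure_le_abs_whitenedError_le {p k b q : ℕ} {v : NNReal} (hv : v ≠ 0) (hb : 0 < b)
    (hq : 0 < q) (hk : p + 4 * q ≤ k) {τ : ℝ} (hτ : 0 < τ) (j : Fin (p + 1)) :
    ((Measure.pi fun _ : Fin b => stdGaussianMatrix k (p + 1)).prod (noiseLaw k b v))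
        {x | τ ≤ |whitenedError x.1 x.2 j|} ≤
      2 * ENNReal.ofReal (q.factorial * (2 * v / (b * τ ^ 2)) ^ q) *
        (((k - p : ℕ) : ENNReal)⁻¹ * gaussianNegHalfMoment ^ 4) ^ q := by
  have hb' : (0 : ℝ) < b := by exact_mod_cast hb
  rw [Measure.prod_apply (measurableSet_le measurable_const (measurable_whitenedError j).abs)]
  let F : (Fin k → Fin (p + 1) → ℝ) → ENNReal := fun z =>
    ENNReal.ofReal (∑ r, leastSquaresMatrix (Matrix.of z) j r ^ 2)
  have hF : Measurable F := (Finset.measurable_sum _ fun r _ =>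
    (measurable_leastSquaresMatrix j r).pow_const 2).ennreal_ofReal
  have hpt : ∀ Z : Fin b → Fin k → Fin (p + 1) → ℝ,
      noiseLaw k b v {η | τ ≤ |whitenedError Z η j|} ≤
        2 * ENNReal.ofReal (q.factorial * (2 * v / (b * τ ^ 2)) ^ q) *
          ((b : ENNReal)⁻¹ * ∑ s, F (Z s)) ^ q := fun Z => by
    simp_rw [whitenedError_apply]
    refine (noiseLaw_le_abs_sum_le hv _ hτ q).trans (le_of_eq ?_)
    have hsum : (b : ENNReal)⁻¹ * ∑ s, F (Z s) = ENNReal.ofReal ((b : ℝ)⁻¹ *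
        ∑ s, ∑ r, leastSquaresMatrix (Matrix.of (Z s)) j r ^ 2) := by
      rw [ENNReal.ofReal_mul (by positivity), ENNReal.ofReal_inv_of_pos hb', ENNReal.ofReal_natCast,
        ENNReal.ofReal_sum_of_nonneg fun s _ => Finset.sum_nonneg fun r _ => sq_nonneg _]
    rw [hsum, mul_assoc, ← ENNReal.ofReal_pow, ← ENNReal.ofReal_mul (by positivity), mul_assoc,
      ← mul_pow]
    · congr 5
      simp_rw [mul_pow, ← Finset.mul_sum]
      field_simp
    · exact mul_nonneg (by positivity)
        (Finset.sum_nonneg fun s _ => Finset.sum_nonneg fun r _ => sq_nonneg _)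
  refine (lintegral_mono hpt).trans ?_
  rw [lintegral_const_mul _ (by fun_prop)]
  gcongr
  exact (lintegral_pi_mean_pow_le hF hb hq).trans
    (lintegral_sum_sq_leastSquaresMatrix_pow_le hq hk j)

open scoped MatrixOrder in
lemma measurePreserving_sqrt_multivariateGaussian {p : ℕ} (M : Matrix (Fin p) (Fin p) ℝ) :
    MeasurePreserving
      (fun z : Fin p → ℝ => toEuclideanCLM (𝕜 := ℝ) (CFC.sqrt M) (WithLp.toLp 2 z))
      (Measure.pi fun _ => gaussianReal 0 1) (multivariateGaussian 0 M) where
  measurable := by fun_prop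
  map_eq := by
    simp only [multivariateGaussian, zero_add]
    rw [← map_pi_eq_stdGaussian, Measure.map_map (by fun_prop) (by fun_prop)]
    rfl

open scoped MatrixOrder in
/-- The batch data with covariance `M` obtained from standard Gaussian designs. -/
noncomputable def colorDesigns {p k b : ℕ} (M : Matrix (Fin p) (Fin p) ℝ)
    (x : (Fin b → Fin k → Fin p → ℝ) × BatchNoises k b) :
    BatchDesigns p k b × BatchNoises k b :=
  (fun s r => toEuclideanCLM (𝕜 := ℝ) (CFC.sqrt M) (WithLp.toLp 2 (x.1 s r)), x.2)

lemma measurePreserving_colorDesigns {p : ℕ} (k b : ℕ) (M : Matrix (Fin p) (Fin p) ℝ) (σ : ℝ) :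
    MeasurePreserving (colorDesigns M)
      ((Measure.pi fun _ : Fin b => stdGaussianMatrix k p).prod
        (noiseLaw k b (σ ^ 2).toNNReal)) (batchLaw k b M σ) := by
  have h1 := measurePreserving_pi (fun _ : Fin b => stdGaussianMatrix k p) _ fun _ =>
    measurePreserving_pi (fun _ : Fin k => Measure.pi fun _ : Fin p => gaussianReal 0 1) _
      fun _ => measurePreserving_sqrt_multivariateGaussian M
  exact h1.prod (MeasurePreserving.id _)

open scoped MatrixOrder in
lemma designMatrix_colorDesigns {p k b : ℕ} {M : Matrix (Fin p) (Fin p) ℝ}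
    (x : (Fin b → Fin k → Fin p → ℝ) × BatchNoises k b) (s : Fin b) :
    designMatrix ((colorDesigns M x).1 s) = Matrix.of (x.1 s) * (CFC.sqrt M)ᵀ := by
  ext r j
  simp [designMatrix, colorDesigns, Matrix.mul_apply, Matrix.mulVec, dotProduct, mul_comm]

lemma mulVec_leastSquares_sub {p k : ℕ} (Z : Matrix (Fin k) (Fin p) ℝ)
    {R : Matrix (Fin p) (Fin p) ℝ} (hR : IsUnit R.det) (hZ : (Zᵀ * Z).det ≠ 0) (A : Fin p → ℝ)
    (η : Fin k → ℝ) :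
    R *ᵥ (leastSquares (Z * R) ((Z * R) *ᵥ A + η) - A) = leastSquaresMatrix Z *ᵥ η := by
  have hRt : IsUnit Rᵀ.det := by rwa [Matrix.det_transpose]
  have hpinv : R * (((Z * R)ᵀ * (Z * R))⁻¹ * (Z * R)ᵀ) = leastSquaresMatrix Z := by
    have hXX : (Z * R)ᵀ * (Z * R) = Rᵀ * (Zᵀ * Z) * R := by
      simp only [Matrix.transpose_mul, Matrix.mul_assoc]
    rw [hXX, Matrix.mul_inv_rev, Matrix.mul_inv_rev, Matrix.transpose_mul, leastSquaresMatrix]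
    simp only [Matrix.mul_assoc]
    rw [Matrix.mul_nonsing_inv_cancel_left _ _ hR, Matrix.nonsing_inv_mul_cancel_left _ _ hRt]
  have hleft : leastSquaresMatrix Z * (Z * R) = R := by
    rw [leastSquaresMatrix, Matrix.mul_assoc, ← Matrix.mul_assoc Zᵀ,
      Matrix.nonsing_inv_mul_cancel_left _ _ hZ.isUnit]
  rw [Matrix.mulVec_sub, leastSquares, Matrix.mulVec_mulVec, Matrix.mulVec_mulVec,
    Matrix.mul_assoc, hpinv,
    Matrix.mulVec_add, Matrix.mulVec_mulVec, hleft, add_sub_cancel_left]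

open scoped MatrixOrder in
lemma dotProduct_mulVec_batchAvgLeastSquares_sub {p k b : ℕ} {M : Matrix (Fin p) (Fin p) ℝ}
    (hM : M.PosDef) (hb : 0 < b) (A : Fin p → ℝ)
    (x : (Fin b → Fin k → Fin p → ℝ) × BatchNoises k b)
    (hx : ∀ s, ((Matrix.of (x.1 s))ᵀ * Matrix.of (x.1 s)).det ≠ 0) :
    (batchAvgLeastSquares A (colorDesigns M x) - A) ⬝ᵥ
        (M *ᵥ (batchAvgLeastSquares A (colorDesigns M x) - A)) =
      ∑ j, whitenedError x.1 x.2 j ^ 2 := by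
  have hb' : (b : ℝ) ≠ 0 := by exact_mod_cast hb.ne'
  set R := CFC.sqrt M with hR
  have hRR : R * R = M := CFC.sqrt_mul_sqrt_self M hM.posSemidef.nonneg
  have hRt : Rᵀ = R := by
    have := (CFC.sqrt_nonneg M).isSelfAdjoint
    rwa [IsSelfAdjoint, Matrix.star_eq_conjTranspose,
      Matrix.conjTranspose_eq_transpose_of_trivial] at this
  have hdet : IsUnit R.det := by
    have h : R.det * R.det ≠ 0 := by
      rw [← Matrix.det_mul, hRR]
      exact hM.det_pos.ne'
    exact (left_ne_zero_of_mul h).isUnit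
  have hW : R *ᵥ (batchAvgLeastSquares A (colorDesigns M x) - A) = whitenedError x.1 x.2 := by
    have hA : A = (1 / (b : ℝ)) • ∑ _s : Fin b, A := by
      ext i
      simp [hb']
    have hsub : batchAvgLeastSquares A (colorDesigns M x) - A = (1 / (b : ℝ)) • ∑ s,
        (leastSquares (Matrix.of (x.1 s) * R) ((Matrix.of (x.1 s) * R) *ᵥ A + x.2 s) - A) := by
      rw [Finset.sum_sub_distrib, smul_sub, ← hA, batchAvgLeastSquares]
      simp_rw [designMatrix_colorDesigns, ← hR, hRt]
      rfl
    rw [hsub, Matrix.mulVec_smul, Matrix.mulVec_sum, whitenedError]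
    congr 1
    refine Finset.sum_congr rfl fun s _ => ?_
    exact mulVec_leastSquares_sub (Matrix.of (x.1 s)) hdet (hx s) A (x.2 s)
  have hquad : ∀ u : Fin p → ℝ, u ⬝ᵥ (M *ᵥ u) = (R *ᵥ u) ⬝ᵥ (R *ᵥ u) := fun u => by
    rw [← hRR, ← Matrix.mulVec_mulVec, Matrix.dotProduct_mulVec, ← Matrix.mulVec_transpose, hRt]
  rw [hquad, hW]
  simp [dotProduct, sq]

lemma tail_base_le {κ σ t Λ C : ℝ} {k b q : ℕ} (hκ : 0 ≤ κ) (hσ : 0 < σ) (ht : 0 < t)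
    (hk : 0 < k) (hb : 0 < b) (hq : (q : ℝ) ≤ 2 * Λ)
    (hC : C = 8 * (κ + 1) * Real.exp 2) (hkb : C * Λ ≤ k * b * t) :
    q.factorial * (2 * σ ^ 2 / (b * (σ ^ 2 * t))) ^ q * (2 * κ / k) ^ q ≤ Real.exp (-2) ^ q := by
  have hk' : (0 : ℝ) < k := by exact_mod_cast hk
  have hb' : (0 : ℝ) < b := by exact_mod_cast hb
  have hfac : (q.factorial : ℝ) ≤ (q : ℝ) ^ q := by exact_mod_cast q.factorial_le_pow
  calc _ ≤ (q : ℝ) ^ q * (2 * σ ^ 2 / (b * (σ ^ 2 * t))) ^ q * (2 * κ / k) ^ q := by gcongr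
    _ = (4 * κ * q / (k * b * t)) ^ q := by
        rw [← mul_pow, ← mul_pow]
        congr 1
        field_simp
        ring
    _ ≤ Real.exp (-2) ^ q := by
        gcongr
        have hexp : Real.exp (-2) * Real.exp 2 = 1 := by rw [← Real.exp_add]; simp
        rw [div_le_iff₀ (by positivity)]
        calc 4 * κ * q ≤ 4 * (κ + 1) * (2 * Λ) := by gcongr; linarith
          _ = Real.exp (-2) * (C * Λ) := by
              rw [hC]
              linear_combination (-8 * (κ + 1) * Λ) * hexp
          _ ≤ _ := by gcongr

lemma mul_two_exp_pow_le {p q : ℕ} {l δ : ℝ} (hl : 0 ≤ l) (hδ : Real.exp (-l) ≤ δ)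
    (hq : p + l ≤ q) : p * (2 * Real.exp (-2) ^ q) ≤ δ := by
  have h1 : Real.exp (-2) ^ q ≤ Real.exp (-(2 * p)) * Real.exp (-l) := by
    rw [← Real.exp_nat_mul, ← Real.exp_add]
    gcongr
    linarith
  have h2 : 2 * (p : ℝ) * Real.exp (-(2 * p)) ≤ 1 := by
    have := Real.add_one_le_exp (2 * (p : ℝ))
    rw [Real.exp_neg, ← div_eq_mul_inv, div_le_one (Real.exp_pos _)]
    linarith
  calc p * (2 * Real.exp (-2) ^ q) ≤ p * (2 * (Real.exp (-(2 * p)) * Real.exp (-l))) := by gcongr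
    _ = (2 * p * Real.exp (-(2 * p))) * Real.exp (-l) := by ring
    _ ≤ 1 * Real.exp (-l) := by gcongr
    _ ≤ δ := by rwa [one_mul]

lemma inv_mul_gaussianNegHalfMoment_le {k p : ℕ} (hk : 0 < k) (hp : 2 * p ≤ k) :
    ((k - p : ℕ) : ENNReal)⁻¹ * gaussianNegHalfMoment ^ 4 ≤
      ENNReal.ofReal (2 * gaussianNegHalfMoment.toReal ^ 4 / k) := by
  have hk' : (0 : ℝ) < k := by exact_mod_cast hk
  have hkp : (0 : ℝ) < (k - p : ℕ) := by
    have : 0 < k - p := by omega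
    exact_mod_cast this
  have h2 : (k : ℝ) ≤ 2 * (k - p : ℕ) := by
    have : k ≤ 2 * (k - p) := by omega
    exact_mod_cast this
  rw [← ENNReal.ofReal_toReal gaussianNegHalfMoment_ne_top, ← ENNReal.ofReal_natCast,
    ← ENNReal.ofReal_inv_of_pos hkp, ← ENNReal.ofReal_pow ENNReal.toReal_nonneg,
    ← ENNReal.ofReal_mul (by positivity), ENNReal.toReal_ofReal ENNReal.toReal_nonneg]
  refine ENNReal.ofReal_le_ofReal ?_
  rw [inv_mul_eq_div, div_le_div_iff₀ hkp hk']
  have : 0 ≤ gaussianNegHalfMoment.toReal ^ 4 := by positivity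
  nlinarith

lemma measure_exists_le_abs_whitenedError_le {p k b q : ℕ} {σ t l δ Λ : ℝ} (hp : 1 ≤ p)
    (hσ : 0 < σ) (ht : 0 < t) (hb : 0 < b) (hq : 0 < q) (hk : 2 * p + 8 * q ≤ k)
    (hqΛ : (q : ℝ) ≤ 2 * Λ)
    (hkb : 8 * (gaussianNegHalfMoment.toReal ^ 4 + 1) * Real.exp 2 * Λ ≤ k * b * t)
    (hl : 0 ≤ l) (hδ : Real.exp (-l) ≤ δ) (hql : p + l ≤ q) :
    ((Measure.pi fun _ : Fin b => stdGaussianMatrix k p).prod (noiseLaw k b (σ ^ 2).toNNReal))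
        {x | ∃ j, √(σ ^ 2 * t) ≤ |whitenedError x.1 x.2 j|} ≤ ENNReal.ofReal δ := by
  obtain ⟨m, rfl⟩ : ∃ m, p = m + 1 := ⟨p - 1, by omega⟩
  have hv : (σ ^ 2).toNNReal ≠ 0 := (Real.toNNReal_pos.2 (by positivity)).ne'
  have hτ : 0 < √(σ ^ 2 * t) := Real.sqrt_pos.2 (by positivity)
  have hκ : 0 ≤ gaussianNegHalfMoment.toReal ^ 4 := by positivity
  have hj : ∀ j : Fin (m + 1),
      ((Measure.pi fun _ : Fin b => stdGaussianMatrix k (m + 1)).prod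
        (noiseLaw k b (σ ^ 2).toNNReal)) {x | √(σ ^ 2 * t) ≤ |whitenedError x.1 x.2 j|} ≤
      ENNReal.ofReal (2 * Real.exp (-2) ^ q) := fun j => by
    refine (measure_le_abs_whitenedError_le hv hb hq (by omega) hτ j).trans ?_
    rw [Real.coe_toNNReal _ (by positivity), Real.sq_sqrt (by positivity)]
    calc _ ≤ 2 * ENNReal.ofReal (q.factorial * (2 * σ ^ 2 / (b * (σ ^ 2 * t))) ^ q) *
          ENNReal.ofReal (2 * gaussianNegHalfMoment.toReal ^ 4 / k) ^ q := by
          gcongr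
          exact inv_mul_gaussianNegHalfMoment_le (by omega) (by omega)
      _ = ENNReal.ofReal (2 * (q.factorial * (2 * σ ^ 2 / (b * (σ ^ 2 * t))) ^ q *
          (2 * gaussianNegHalfMoment.toReal ^ 4 / k) ^ q)) := by
          rw [← ENNReal.ofReal_pow (by positivity), mul_assoc, ← ENNReal.ofReal_mul (by positivity),
            ENNReal.ofReal_mul zero_le_two, ENNReal.ofReal_ofNat]
      _ ≤ _ := by
          refine ENNReal.ofReal_le_ofReal ?_
          gcongr
          exact tail_base_le hκ hσ ht (by omega) hb hqΛ rfl hkb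
  rw [Set.ofPred_exists]
  refine (measure_iUnion_fintype_le _ _).trans ((Finset.sum_le_sum fun j _ => hj j).trans ?_)
  rw [Finset.sum_const, Finset.card_univ, Fintype.card_fin, nsmul_eq_mul,
    ← ENNReal.ofReal_natCast, ← ENNReal.ofReal_mul (by positivity)]
  exact ENNReal.ofReal_le_ofReal (mul_two_exp_pow_le hl hδ hql)

lemma one_sub_le_batchLaw {p k b : ℕ} {M : Matrix (Fin p) (Fin p) ℝ} (hM : M.PosDef)
    (A : Fin p → ℝ) {σ t δ : ℝ} (ht : 0 ≤ t) (hδ : 0 ≤ δ) (hb : 0 < b) (hk : p + 4 ≤ k)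
    (h : ((Measure.pi fun _ : Fin b => stdGaussianMatrix k p).prod
        (noiseLaw k b (σ ^ 2).toNNReal))
        {x | ∃ j, √(σ ^ 2 * t) ≤ |whitenedError x.1 x.2 j|} ≤ ENNReal.ofReal δ) :
    1 - δ ≤ (batchLaw k b M σ).real
        {ω | |(batchAvgLeastSquares A ω - A) ⬝ᵥ (M *ᵥ (batchAvgLeastSquares A ω - A))|
              ≤ p * (σ ^ 2 * t)} := by
  set μ := (Measure.pi fun _ : Fin b => stdGaussianMatrix k p).prod
    (noiseLaw k b (σ ^ 2).toNNReal) with hμ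
  set S := {ω : BatchDesigns p k b × BatchNoises k b |
    |(batchAvgLeastSquares A ω - A) ⬝ᵥ (M *ᵥ (batchAvgLeastSquares A ω - A))|
              ≤ p * (σ ^ 2 * t)} with hS
  set bad := {x : (Fin b → Fin k → Fin p → ℝ) × BatchNoises k b |
    ∃ j, √(σ ^ 2 * t) ≤ |whitenedError x.1 x.2 j|} with hbad
  have hT := measurePreserving_colorDesigns k b M σ
  have : IsProbabilityMeasure (batchLaw k b M σ) := by
    rw [← hT.map_eq]
    exact Measure.isProbabilityMeasure_map hT.measurable.aemeasurable
  have hdet : ∀ᵐ x ∂μ, ∀ s, ((Matrix.of (x.1 s))ᵀ * Matrix.of (x.1 s)).det ≠ 0 := by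
    refine Measure.quasiMeasurePreserving_fst.ae (p := fun z : Fin b → Fin k → Fin p → ℝ =>
      ∀ s, ((Matrix.of (z s))ᵀ * Matrix.of (z s)).det ≠ 0) ?_
    exact ae_all_iff.2 fun s =>
      (measurePreserving_eval (fun _ : Fin b => stdGaussianMatrix k p) s).quasiMeasurePreserving.ae
        (p := fun z => ((Matrix.of z)ᵀ * Matrix.of z).det ≠ 0)
        (ae_det_transpose_mul_self_ne_zero hk)
  have hsub : badᶜ ≤ᵐ[μ] colorDesigns M ⁻¹' S := by
    filter_upwards [hdet] with x hx hxb
    change colorDesigns M x ∈ S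
    rw [hS, Set.mem_ofPred_eq]
    rw [dotProduct_mulVec_batchAvgLeastSquares_sub hM hb A x hx,
      abs_of_nonneg (Finset.sum_nonneg fun j _ => sq_nonneg _)]
    have hle : ∀ j, whitenedError x.1 x.2 j ^ 2 ≤ σ ^ 2 * t := fun j => by
      have hj : |whitenedError x.1 x.2 j| < √(σ ^ 2 * t) := by
        by_contra hcon
        exact hxb ⟨j, not_lt.1 hcon⟩
      rw [← sq_abs, ← Real.sq_sqrt (show 0 ≤ σ ^ 2 * t by positivity)]
      gcongr
    refine (Finset.sum_le_sum fun j _ => hle j).trans (le_of_eq ?_)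
    simp
  have hbm : MeasurableSet bad := by
    rw [hbad, Set.ofPred_exists]
    exact MeasurableSet.iUnion fun j =>
      measurableSet_le measurable_const (measurable_whitenedError j).abs
  have hlow : μ.real badᶜ ≤ (batchLaw k b M σ).real S := by
    refine ENNReal.toReal_mono (measure_ne_top _ _) ((measure_mono_ae hsub).trans ?_)
    rw [← hT.map_eq]
    exact Measure.le_map_apply hT.measurable.aemeasurable S
  have hbadr : μ.real bad ≤ δ := ENNReal.toReal_le_of_le_ofReal hδ h
  rw [probReal_compl_eq_one_sub hbm] at hlow
  linarith

theorem stmt_8 : ∃ Ck Ckb : ℝ, 0 < Ck ∧ 0 < Ckb ∧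
    ∀ (p d : ℕ) (_ : 1 ≤ p) (_ : p ≤ d)
      (M : Matrix (Fin p) (Fin p) ℝ) (_ : M.PosDef)
      (A : Fin p → ℝ) (σy : ℝ) (_ : 0 < σy)
      (n davg ε δ : ℝ) (_ : 1 ≤ n) (_ : 0 < davg) (_ : 0 < ε) (_ : ε < 1)
      (_ : 0 < δ) (_ : δ < 1) (k b : ℕ),
      Ck * ((p : ℝ) + Real.log (n / (ε * δ))) ≤ (k : ℝ) →
      Ckb * (n * davg / ε) * ((d : ℝ) + Real.log (n / (ε * δ))) ≤ (k : ℝ) * (b : ℝ) →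
      1 - δ ≤ (batchLaw k b M σy).real
        {ω | |(batchAvgLeastSquares A ω - A) ⬝ᵥ (M *ᵥ (batchAvgLeastSquares A ω - A))|
              ≤ σy ^ 2 * (ε * (p : ℝ) / (n * davg))} := by
  refine ⟨18, 8 * (gaussianNegHalfMoment.toReal ^ 4 + 1) * Real.exp 2, by norm_num, by positivity,
    ?_⟩
  intro p d hp hpd M hM A σ hσ n davg ε δ hn hdavg hε hε1 hδ hδ1 k b hk hkb
  have hn0 : 0 < n := by linarith
  have hratio : δ⁻¹ ≤ n / (ε * δ) := by
    rw [inv_eq_one_div, div_le_div_iff₀ hδ (by positivity)]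
    nlinarith
  set l := Real.log (n / (ε * δ)) with hldef
  have hl : 0 ≤ l := Real.log_nonneg (((one_le_inv₀ hδ).2 hδ1.le).trans hratio)
  have hexp : Real.exp (-l) ≤ δ := by
    rw [Real.exp_neg, hldef, Real.exp_log (by positivity)]
    exact inv_le_of_inv_le₀ hδ hratio
  have hp1 : (1 : ℝ) ≤ p := by exact_mod_cast hp
  have hpd' : (p : ℝ) ≤ d := by exact_mod_cast hpd
  have hceil := Nat.le_ceil ((p : ℝ) + l)
  have hceil2 := Nat.ceil_lt_add_one (show 0 ≤ (p : ℝ) + l by linarith)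
  set q := ⌈(p : ℝ) + l⌉₊
  have hq : 0 < q := by
    have : (0 : ℝ) < q := by linarith
    exact_mod_cast this
  have hkq : 2 * p + 8 * q ≤ k := by
    have : (2 * p + 8 * q : ℝ) ≤ k := by linarith
    exact_mod_cast this
  have hb : 0 < b := by
    rcases Nat.eq_zero_or_pos b with rfl | h
    · have : 0 < 8 * (gaussianNegHalfMoment.toReal ^ 4 + 1) * Real.exp 2 * (n * davg / ε) * (d + l) :=
        mul_pos (by positivity) (by linarith)
      simp only [Nat.cast_zero, mul_zero] at hkb
      linarith
    · exact h
  have ht : 0 < ε / (n * davg) := by positivity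
  have hkb' : 8 * (gaussianNegHalfMoment.toReal ^ 4 + 1) * Real.exp 2 * (d + l) ≤
      k * b * (ε / (n * davg)) := by
    refine le_trans (le_of_eq ?_) (mul_le_mul_of_nonneg_right hkb ht.le)
    field_simp
  have h := measure_exists_le_abs_whitenedError_le hp hσ ht hb hq hkq
    (show (q : ℝ) ≤ 2 * (d + l) by linarith) hkb' hl hexp hceil
  have hfin := one_sub_le_batchLaw hM A ht.le hδ.le hb (by omega) h
  rwa [show (p : ℝ) * (σ ^ 2 * (ε / (n * davg))) = σ ^ 2 * (ε * p / (n * davg)) by ring] at hfin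
end

section
/- For probability measures $P,Q$ on $\mathbb{R}^n$ let $d_{TV}(P,Q)=\sup_{A}|P(A)-Q(A)|$, the supremum over Borel sets $A\subseteq\mathbb{R}^n$, and for $v>0$ let $N(0,v)$ be the centered Gaussian on $\mathbb{R}$ with variance $v$. There exist universal constants $c, c' > 0$ such that for every $n \ge 1$ and every $\varepsilon \in (0,1)$ the following holds. Let $\mathcal{P}$ be the class of $n$-fold centered Gaussian product distributions on $\mathbb{R}^n$, i.e. product measures $\bigotimes_{i=1}^n N(0, v_i)$ with all $v_i > 0$. Any estimator, i.e. a measurable map taking $m$ i.i.d. samples from a distribution $P \in \mathcal{P}$ to a probability measure $\widehat{P}$ on $\mathbb{R}^n$ (measurable in the sense that $\widehat{P}(A)$ is a measurable function of the samples for every Borel set $A$), that satisfies, for every $P \in \mathcal{P}$, $\Pr( d_{TV}(P, \widehat{P}) \le c\,\varepsilon ) \ge 2/3$, must use at least $m \ge c' n/\varepsilon^2$ samples. -/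
open MeasureTheory ProbabilityTheory
open scoped NNReal ENNReal

/-- Total variation distance between two probability measures: the supremum of
`|P A - Q A|` over measurable sets `A`. The family is bounded by `1` and non-empty, so the real
supremum is a genuine one. -/
noncomputable def dTV {α : Type*} [MeasurableSpace α] (P Q : ProbabilityMeasure α) : ℝ :=
  ⨆ A : {A : Set α // MeasurableSet A},
    |(P : Measure α).real A.1 - (Q : Measure α).real A.1|

/-- The centered Gaussian product distribution `⊗ᵢ N(0, vᵢ)` on `ℝⁿ`, with variances `vᵢ`. -/
noncomputable def gaussianProduct {n : ℕ} (v : Fin n → ℝ≥0) : ProbabilityMeasure (Fin n → ℝ) :=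
  ⟨Measure.pi fun i => gaussianReal 0 (v i), inferInstance⟩

/-- The joint law of `m` i.i.d. samples from `P`. -/
noncomputable def iidSamples {α : Type*} [MeasurableSpace α] (m : ℕ) (P : ProbabilityMeasure α) :
    Measure (Fin m → α) :=
  Measure.pi fun _ => (P : Measure α)

section TotalVariation

variable {α : Type*} [MeasurableSpace α]

lemma abs_measureReal_sub_le_dTV (P Q : ProbabilityMeasure α) {A : Set α} (hA : MeasurableSet A) :
    |(P : Measure α).real A - (Q : Measure α).real A| ≤ dTV P Q := by
  refine le_ciSup (f := fun A : {A : Set α // MeasurableSet A} =>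
    |(P : Measure α).real A.1 - (Q : Measure α).real A.1|) ⟨1, ?_⟩ ⟨A, hA⟩
  rintro _ ⟨B, rfl⟩
  exact abs_sub_le_of_le_of_le measureReal_nonneg measureReal_le_one measureReal_nonneg
    measureReal_le_one |>.trans (by norm_num)

lemma integral_sub_integral_le_mul_dTV (P Q : ProbabilityMeasure α) {f : α → ℝ} (hf : Measurable f)
    {M : ℝ} (hM : 0 ≤ M) (hfM : ∀ x, |f x| ≤ M) :
    ∫ x, f x ∂(P : Measure α) - ∫ x, f x ∂(Q : Measure α) ≤ 2 * M * dTV P Q := by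
  have hinteg (R : ProbabilityMeasure α) : Integrable f (R : Measure α) :=
    Integrable.of_bound hf.aestronglyMeasurable M (ae_of_all _ hfM)
  have hlayer (R : ProbabilityMeasure α) : ∫ x, f x ∂(R : Measure α) + M =
      ∫ t in Set.Ioc 0 (2 * M), (R : Measure α).real {a | t ≤ f a + M} := by
    rw [← Integrable.integral_eq_integral_Ioc_meas_le (f := fun x => f x + M)
      ((hinteg R).add (integrable_const M)) (ae_of_all _ fun x => ?_)
      (ae_of_all _ fun x => ?_)]
    · simp [integral_add (hinteg R) (integrable_const M)]
    · have := (abs_le.1 (hfM x)).1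
      simp only [Pi.zero_apply]; linarith
    · have := (abs_le.1 (hfM x)).2
      simp only; linarith
  have hmeas (R : ProbabilityMeasure α) : IntegrableOn
      (fun t => (R : Measure α).real {a | t ≤ f a + M}) (Set.Ioc 0 (2 * M)) := by
    have hanti : Antitone fun t => (R : Measure α).real {a | t ≤ f a + M} :=
      fun s t hst => measureReal_mono fun a ha => hst.trans ha
    exact Integrable.of_bound hanti.measurable.aestronglyMeasurable 1
      (ae_of_all _ fun t => by
        rw [Real.norm_of_nonneg measureReal_nonneg]; exact measureReal_le_one)
  have key : ∫ x, f x ∂(P : Measure α) - ∫ x, f x ∂(Q : Measure α) =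
      ∫ t in Set.Ioc 0 (2 * M), ((P : Measure α).real {a | t ≤ f a + M} -
        (Q : Measure α).real {a | t ≤ f a + M}) := by
    rw [integral_sub (hmeas P) (hmeas Q), ← hlayer P, ← hlayer Q]; ring
  rw [key]
  calc _ ≤ ∫ _ in Set.Ioc 0 (2 * M), dTV P Q := by
        refine integral_mono ((hmeas P).sub (hmeas Q)) (integrable_const _) fun t => ?_
        exact (le_abs_self _).trans (abs_measureReal_sub_le_dTV P Q
          (measurableSet_le measurable_const (hf.add_const M)))
    _ = _ := by simp [hM]

end TotalVariation

section ProductTest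

lemma one_add_mul_I_pow_bounds {β : ℝ} (hβ : 0 ≤ β) (k : ℕ) (hk : k * β ≤ 1) :
    k * β / 2 ≤ ((1 + β * Complex.I : ℂ) ^ k).im ∧ ((1 + β * Complex.I : ℂ) ^ k).im ≤ k * β ∧
      1 - (k * β) ^ 2 / 2 ≤ ((1 + β * Complex.I : ℂ) ^ k).re ∧
      ((1 + β * Complex.I : ℂ) ^ k).re ≤ 1 := by
  induction k with
  | zero => simp
  | succ k ih =>
    push_cast at hk ⊢
    have hkβ : (0 : ℝ) ≤ k * β := by positivity
    obtain ⟨h1, h2, h3, h4⟩ := ih (by linarith)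
    have hre : ((1 + β * Complex.I : ℂ) ^ (k + 1)).re =
        ((1 + β * Complex.I : ℂ) ^ k).re - β * ((1 + β * Complex.I : ℂ) ^ k).im := by
      rw [pow_succ]; simp; ring
    have him : ((1 + β * Complex.I : ℂ) ^ (k + 1)).im =
        ((1 + β * Complex.I : ℂ) ^ k).im + β * ((1 + β * Complex.I : ℂ) ^ k).re := by
      rw [pow_succ]; simp; ring
    rw [hre, him]
    have hhalf : 1 / 2 ≤ ((1 + β * Complex.I : ℂ) ^ k).re := by nlinarith
    have e1 := mul_le_mul_of_nonneg_left hhalf hβ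
    have e2 := mul_le_mul_of_nonneg_left h4 hβ
    have e3 := mul_le_mul_of_nonneg_left h2 hβ
    have e4 := mul_nonneg hβ (by linarith : 0 ≤ ((1 + β * Complex.I : ℂ) ^ k).im)
    refine ⟨by linarith, by linarith, by nlinarith, by linarith⟩

variable {ι : Type*} [Fintype ι]

/-- Bounded test functions `a i` on the coordinates in `D`, centered under `μ i` and with mean `η`
under `ν i`, combine into a test that separates the product measures by order `√|D| η`. -/
lemma sqrt_card_mul_le_dTV_pi {E : ι → Type*} [∀ i, MeasurableSpace (E i)]
    (μ ν : ∀ i, Measure (E i)) [∀ i, IsProbabilityMeasure (μ i)] [∀ i, IsProbabilityMeasure (ν i)]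
    (D : Finset ι) {η : ℝ} (hη : 0 ≤ η) (hD : D.card * η ^ 2 ≤ 1)
    (a : ∀ i, E i → ℝ) (ha : ∀ i, Measurable (a i)) (ha1 : ∀ i x, |a i x| ≤ 1)
    (ha0 : ∀ i ∉ D, ∀ x, a i x = 0)
    (hμ : ∀ i ∈ D, ∫ x, a i x ∂μ i = 0) (hν : ∀ i ∈ D, ∫ x, a i x ∂ν i = η) :
    √D.card * η / 8 ≤
      dTV (⟨Measure.pi ν, inferInstance⟩ : ProbabilityMeasure (∀ i, E i))
        ⟨Measure.pi μ, inferInstance⟩ := by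
  classical
  set k : ℕ := D.card with hk
  set τ : ℝ := (√k)⁻¹ with hτ
  have hτ0 : 0 ≤ τ := by positivity
  have hkτ : k * τ = √k := by
    rw [hτ]
    rcases Nat.eq_zero_or_pos k with h | h
    · simp [h]
    · have : (0 : ℝ) < k := by exact_mod_cast h
      nth_rewrite 1 [← Real.mul_self_sqrt this.le]
      field_simp
  let F : (∀ i, E i) → ℂ := fun x => ∏ i, (1 + ((τ * a i (x i) : ℝ) : ℂ) * Complex.I)
  have hFmeas : Measurable F := by
    refine Finset.measurable_fun_prod _ fun i _ => ?_
    have := (ha i).comp (measurable_pi_apply (X := E) i)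
    exact ((Complex.measurable_ofReal.comp (this.const_mul τ)).mul_const _).const_add _
  have hFnorm (x) : ‖F x‖ ≤ 2 := by
    have hsq : ‖F x‖ ^ 2 ≤ 4 := by
      have h1 : ‖F x‖ ^ 2 = ∏ i, (1 + (τ * a i (x i)) ^ 2) := by
        simp only [F, norm_prod, ← Finset.prod_pow]
        refine Finset.prod_congr rfl fun i _ => ?_
        rw [Complex.sq_norm, Complex.normSq_apply]
        simp; ring
      have h2 : ∏ i, (1 + (τ * a i (x i)) ^ 2) ≤ ∏ i, (if i ∈ D then (1 + τ ^ 2) else 1) := by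
        refine Finset.prod_le_prod (fun i _ => by positivity) fun i _ => ?_
        split_ifs with h
        · have : a i (x i) ^ 2 ≤ 1 := by
            rw [← sq_abs]; exact pow_le_one₀ (abs_nonneg _) (ha1 i _)
          rw [mul_pow]; nlinarith [sq_nonneg τ]
        · simp [ha0 i h]
      have h3 : ∏ i, (if i ∈ D then (1 + τ ^ 2) else 1) = (1 + τ ^ 2) ^ k := by
        rw [Finset.prod_ite_mem]; simp [hk]
      have h4 : (1 + τ ^ 2) ^ k ≤ Real.exp (k * τ ^ 2) := by
        rw [Real.exp_nat_mul]
        exact pow_le_pow_left₀ (by positivity) (by linarith [Real.add_one_le_exp (τ ^ 2)]) _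
      have h5 : k * τ ^ 2 ≤ 1 := by
        rw [pow_two, ← mul_assoc, hkτ, hτ]; exact mul_inv_le_one
      have h6 : Real.exp (k * τ ^ 2) ≤ Real.exp 1 := Real.exp_le_exp.2 h5
      linarith [Real.exp_one_lt_d9]
    nlinarith [norm_nonneg (F x)]
  have hinteg (ρ : ∀ i, Measure (E i)) [∀ i, IsProbabilityMeasure (ρ i)] (s : ℝ)
      (hρ : ∀ i ∈ D, ∫ x, a i x ∂ρ i = s) :
      ∫ x, (F x).im ∂(Measure.pi ρ) = ((1 + ((τ * s : ℝ) : ℂ) * Complex.I) ^ k).im := by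
    have hFi : Integrable F (Measure.pi ρ) :=
      Integrable.of_bound hFmeas.aestronglyMeasurable 2 (ae_of_all _ hFnorm)
    have : ∫ x, (F x).im ∂(Measure.pi ρ) = (∫ x, F x ∂(Measure.pi ρ)).im := by
      have := integral_im (𝕜 := ℂ) hFi
      simpa using this
    rw [this]
    congr 1
    simp only [F]
    rw [integral_fintype_prod_eq_prod
      (fun i (y : E i) => (1 + ((τ * a i y : ℝ) : ℂ) * Complex.I))]
    have hfac (i) : ∫ y, (1 + ((τ * a i y : ℝ) : ℂ) * Complex.I) ∂ρ i =
        if i ∈ D then (1 + ((τ * s : ℝ) : ℂ) * Complex.I) else 1 := by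
      have hai : Integrable (a i) (ρ i) :=
        Integrable.of_bound (ha i).aestronglyMeasurable 1 (ae_of_all _ (ha1 i))
      split_ifs with h
      · rw [integral_add (integrable_const _) ((hai.const_mul τ).ofReal.mul_const _),
          integral_mul_const, integral_complex_ofReal, integral_const_mul, hρ i h]
        simp
      · simp [ha0 i h]
    simp_rw [hfac]
    rw [Finset.prod_ite_mem]; simp [hk]
  have hβ : k * (τ * η) ≤ 1 := by
    rw [← mul_assoc, hkτ]
    have : (√k * η) ^ 2 ≤ 1 := by rw [mul_pow, Real.sq_sqrt (by positivity)]; exact hD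
    nlinarith [Real.sqrt_nonneg (k : ℝ)]
  have hlow := (one_add_mul_I_pow_bounds (mul_nonneg hτ0 hη) k hβ).1
  rw [← mul_assoc, hkτ, ← hinteg ν η hν] at hlow
  have hzero := hinteg μ 0 hμ
  simp only [mul_zero, Complex.ofReal_zero, zero_mul, add_zero, one_pow, Complex.one_im] at hzero
  have := integral_sub_integral_le_mul_dTV
    (⟨Measure.pi ν, inferInstance⟩ : ProbabilityMeasure (∀ i, E i)) ⟨Measure.pi μ, inferInstance⟩
    (Complex.measurable_im.comp hFmeas) zero_le_two
    (fun x => (Complex.abs_im_le_norm _).trans (hFnorm x))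
  simp only [Function.comp_apply, ProbabilityMeasure.coe_mk] at this
  rw [hzero] at this
  linarith

end ProductTest

section Gaussian

lemma integral_cos_gaussianReal (v : ℝ≥0) :
    ∫ x, Real.cos x ∂(gaussianReal 0 v) = Real.exp (-(v : ℝ) / 2) := by
  have h := charFun_gaussianReal (μ := 0) (v := v) 1
  rw [charFun_apply_real] at h
  have hi : Integrable (fun x : ℝ => Complex.exp (((1 : ℝ) : ℂ) * x * Complex.I))
      (gaussianReal 0 v) := by
    refine Integrable.of_bound (by fun_prop) 1 (ae_of_all _ fun x => ?_)
    rw [← Complex.ofReal_mul, Complex.norm_exp_ofReal_mul_I]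
  have h2 := integral_re (𝕜 := ℂ) hi
  rw [h] at h2
  have h3 : Complex.exp ((1 : ℝ) * (0 : ℝ) * Complex.I - v * ((1 : ℝ) : ℂ) ^ 2 / 2) =
      (Real.exp (-(v : ℝ) / 2) : ℂ) := by
    push_cast
    congr 1
    ring
  rw [h3] at h2
  simpa only [RCLike.re_to_complex, Complex.ofReal_re, Complex.ofReal_one, one_mul,
    Complex.exp_ofReal_mul_I_re] using h2

/-- The variances `1` and `1 + δ`, selected by a bit. -/
noncomputable def bitVariance (δ : ℝ≥0) (b : Bool) : ℝ≥0 := if b then 1 + δ else 1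

lemma bitVariance_pos (δ : ℝ≥0) (b : Bool) : 0 < bitVariance δ b := by
  unfold bitVariance; split_ifs <;> positivity

lemma sqrt_hammingDist_mul_le_dTV {n : ℕ} {δ : ℝ≥0} (hδ1 : δ ≤ 1) (hδn : n * (δ : ℝ) ^ 2 ≤ 1)
    (θ θ' : Fin n → Bool) :
    √(hammingDist θ θ') * δ / 96 ≤
      dTV (gaussianProduct fun i => bitVariance δ (θ' i))
        (gaussianProduct fun i => bitVariance δ (θ i)) := by
  have hδ0 : (0 : ℝ) ≤ δ := δ.2
  have hδ1' : (δ : ℝ) ≤ 1 := hδ1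
  let m (b : Bool) : ℝ := Real.exp (-(bitVariance δ b : ℝ) / 2)
  have hm01 (b) : 0 < m b ∧ m b ≤ 1 := by
    refine ⟨Real.exp_pos _, Real.exp_le_one_iff.2 ?_⟩
    have := (bitVariance δ b).2
    linarith
  let η : ℝ := (m false - m true) / 2
  have hmt : m true = m false * Real.exp (-(δ / 2 : ℝ)) := by
    simp only [m, bitVariance, ← Real.exp_add]
    congr 1
    simp; ring
  have hmf : 1 / 2 ≤ m false := by
    have := Real.add_one_le_exp (-(1 : ℝ) / 2)
    simp only [m, bitVariance]
    simp only [Bool.false_eq_true, if_false, NNReal.coe_one]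
    linarith
  have hexp_up : Real.exp (-(δ / 2 : ℝ)) ≤ 1 - δ / 3 := by
    rw [Real.exp_neg, inv_le_comm₀ (Real.exp_pos _) (by linarith)]
    refine le_trans ?_ (Real.add_one_le_exp _)
    rw [inv_le_iff_one_le_mul₀ (by linarith)]
    nlinarith
  have hexp_lo : 1 - δ / 2 ≤ Real.exp (-(δ / 2 : ℝ)) := by
    linarith [Real.add_one_le_exp (-(δ / 2 : ℝ))]
  have hη_lo : δ / 12 ≤ η := by
    simp only [η, hmt]; nlinarith
  have hη_up : η ≤ δ := by
    have := (hm01 false).2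
    simp only [η, hmt]; nlinarith
  let D : Finset (Fin n) := {i | θ i ≠ θ' i}
  have hDcard : D.card = hammingDist θ θ' := rfl
  have hDn : (D.card : ℝ) ≤ n := by
    exact_mod_cast (Finset.card_le_univ D).trans_eq (Fintype.card_fin n)
  let sgn (b : Bool) : ℝ := if b then 1 else -1
  let a (i : Fin n) (x : ℝ) : ℝ :=
    if θ i ≠ θ' i then sgn (θ i) * ((Real.cos x - m (θ i)) / 2) else 0
  have hsgn (b) : |sgn b| = 1 := by cases b <;> simp [sgn]
  have hinteg (b : Bool) (c r : ℝ) :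
      ∫ x, r * ((Real.cos x - c) / 2) ∂(gaussianReal 0 (bitVariance δ b)) =
        r * ((m b - c) / 2) := by
    rw [integral_const_mul, integral_div, integral_sub _ (integrable_const _),
      integral_cos_gaussianReal]
    · simp [m]
    · exact Integrable.of_bound (by fun_prop) 1 (ae_of_all _ Real.abs_cos_le_one)
  have key := sqrt_card_mul_le_dTV_pi
    (fun i => gaussianReal 0 (bitVariance δ (θ i))) (fun i => gaussianReal 0 (bitVariance δ (θ' i)))
    D (η := η) (by linarith) (le_trans (by gcongr; linarith) hδn) a ?_ ?_ ?_ ?_ ?_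
  · rw [hDcard] at key
    refine le_trans ?_ key
    have := mul_le_mul_of_nonneg_left hη_lo (Real.sqrt_nonneg (hammingDist θ θ' : ℝ))
    linarith
  · intro i
    by_cases h : θ i ≠ θ' i
    · simp only [a, if_pos h]; fun_prop
    · simp only [a, if_neg h]; fun_prop
  · intro i x
    by_cases h : θ i ≠ θ' i
    · simp only [a, if_pos h, abs_mul, hsgn, one_mul]
      have h1 := hm01 (θ i)
      have h2 := Real.neg_one_le_cos x
      have h3 := Real.cos_le_one x
      rw [abs_le]; constructor <;> linarith
    · simp only [a, if_neg h]; simp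
  · intro i hi x
    have : ¬ θ i ≠ θ' i := by simpa [D] using hi
    simp only [a, if_neg this]
  · intro i hi
    have : θ i ≠ θ' i := by simpa [D] using hi
    simp only [a, if_pos this]
    rw [hinteg]; simp
  · intro i hi
    have : θ i ≠ θ' i := by simpa [D] using hi
    simp only [a, if_pos this]
    rw [hinteg]
    cases h1 : θ i <;> cases h2 : θ' i
    · simp [h1, h2] at this
    · simp [sgn, η]; ring
    · simp [sgn, η]
    · simp [h1, h2] at this

end Gaussian

section SquareIntegrableDensity

/-- `ν` has a density with respect to `μ` whose square has `μ`-integral `K`. -/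
def HasSqDensity {α : Type*} [MeasurableSpace α] (μ ν : Measure α) (K : ℝ) : Prop :=
  ∃ ρ : α → ℝ, Measurable ρ ∧ (∀ x, 0 ≤ ρ x) ∧ Integrable (fun x => ρ x ^ 2) μ ∧
    ∫ x, ρ x ^ 2 ∂μ = K ∧ ν = μ.withDensity fun x => ENNReal.ofReal (ρ x)

lemma integrable_of_integrable_sq {α : Type*} [MeasurableSpace α] {μ : Measure α}
    [IsFiniteMeasure μ] {ρ : α → ℝ} (hρ : Measurable ρ) (h : Integrable (fun x => ρ x ^ 2) μ) :
    Integrable ρ μ :=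
  ((memLp_two_iff_integrable_sq hρ.aestronglyMeasurable).2 h).integrable one_le_two

lemma HasSqDensity.refl {α : Type*} [MeasurableSpace α] (μ : Measure α) [IsProbabilityMeasure μ] :
    HasSqDensity μ μ 1 :=
  ⟨fun _ => 1, measurable_const, fun _ => zero_le_one, by simp, by simp, by simp⟩

lemma HasSqDensity.measureReal_sub_le {α : Type*} [MeasurableSpace α] {μ ν : Measure α} {K : ℝ}
    [IsProbabilityMeasure μ] [IsProbabilityMeasure ν] (h : HasSqDensity μ ν K)
    {t : ℝ} (ht : 0 < t) {s : Set α} (hs : MeasurableSet s) :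
    ν.real s - μ.real s ≤ (K - 1) / (2 * t) + t / 2 := by
  obtain ⟨ρ, hρ, hρ0, hρ2, hK, hν⟩ := h
  have hi := integrable_of_integrable_sq hρ hρ2
  have hreal {s : Set α} (hs : MeasurableSet s) : ν.real s = ∫ x in s, ρ x ∂μ := by
    rw [hν, measureReal_def, withDensity_apply _ hs,
      integral_eq_lintegral_of_nonneg_ae (ae_of_all _ hρ0) hρ.aestronglyMeasurable]
  have hone : ∫ x, ρ x ∂μ = 1 := by
    have := hreal MeasurableSet.univ
    simpa using this.symm
  have hi1 : Integrable (fun x => ρ x - 1) μ := hi.sub (integrable_const 1)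
  have hlin : Integrable (fun x => ρ x ^ 2 - 2 * ρ x) μ := hρ2.sub (hi.const_mul 2)
  have hexpand : (fun x => (ρ x - 1) ^ 2) = fun x => ρ x ^ 2 - 2 * ρ x + 1 := by ext x; ring
  have hsqi : Integrable (fun x => (ρ x - 1) ^ 2) μ := by
    rw [hexpand]; exact hlin.add (integrable_const 1)
  have hsq : ∫ x, (ρ x - 1) ^ 2 ∂μ = K - 1 := by
    rw [hexpand, integral_add hlin (integrable_const _), integral_sub hρ2 (hi.const_mul 2),
      integral_const_mul, hone, hK]
    simp; ring
  have hg : Integrable (fun x => (ρ x - 1) ^ 2 / (2 * t) + t / 2) μ :=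
    (hsqi.div_const _).add (integrable_const _)
  calc ν.real s - μ.real s = ∫ x in s, (ρ x - 1) ∂μ := by
        rw [integral_sub hi.integrableOn (integrable_const _), hreal hs]; simp
    _ ≤ ∫ x in s, ((ρ x - 1) ^ 2 / (2 * t) + t / 2) ∂μ := by
        refine integral_mono hi1.integrableOn hg.integrableOn fun x => ?_
        have : (ρ x - 1) ^ 2 / (2 * t) + t / 2 - (ρ x - 1) = (ρ x - 1 - t) ^ 2 / (2 * t) := by
          field_simp; ring
        have h0 : 0 ≤ (ρ x - 1 - t) ^ 2 / (2 * t) := by positivity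
        simp only; linarith
    _ ≤ ∫ x, ((ρ x - 1) ^ 2 / (2 * t) + t / 2) ∂μ :=
        setIntegral_le_integral hg (ae_of_all _ fun x => by simp only [Pi.zero_apply]; positivity)
    _ = (K - 1) / (2 * t) + t / 2 := by
        rw [integral_add (hsqi.div_const _) (integrable_const _), integral_div, hsq]; simp

lemma HasSqDensity.pi {ι : Type*} [Fintype ι] {E : ι → Type*} [∀ i, MeasurableSpace (E i)]
    {μ ν : ∀ i, Measure (E i)} [∀ i, IsProbabilityMeasure (μ i)]
    [∀ i, IsProbabilityMeasure (ν i)] {K : ι → ℝ} (h : ∀ i, HasSqDensity (μ i) (ν i) (K i)) :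
    HasSqDensity (Measure.pi μ) (Measure.pi ν) (∏ i, K i) := by
  choose ρ hρ hρ0 hρ2 hK hν using h
  have hi (i) := integrable_of_integrable_sq (hρ i) (hρ2 i)
  have hmeas : Measurable fun x : ∀ i, E i => ∏ i, ρ i (x i) :=
    Finset.measurable_fun_prod _ fun i _ => (hρ i).comp (measurable_pi_apply i)
  refine ⟨fun x => ∏ i, ρ i (x i), hmeas,
    fun x => Finset.prod_nonneg fun i _ => hρ0 i _, ?_, ?_, ?_⟩
  · simp_rw [← Finset.prod_pow]
    exact Integrable.fintype_prod_dep (f := fun i y => ρ i y ^ 2) hρ2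
  · simp_rw [← Finset.prod_pow]
    rw [integral_fintype_prod_eq_prod (fun i y => ρ i y ^ 2)]
    simp_rw [hK]
  · refine Measure.pi_eq fun s hs => ?_
    have hbox : MeasurableSet (Set.univ.pi s) := MeasurableSet.univ_pi hs
    have hind (i) : ν i (s i) = ENNReal.ofReal (∫ y, (s i).indicator (ρ i) y ∂μ i) := by
      rw [integral_indicator (hs i), hν i, withDensity_apply _ (hs i),
        ofReal_integral_eq_lintegral_ofReal (hi i).integrableOn (ae_of_all _ (hρ0 i))]
    have hi' : Integrable (fun x : ∀ i, E i => ∏ i, ρ i (x i)) (Measure.pi μ) :=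
      Integrable.fintype_prod_dep hi
    rw [withDensity_apply _ hbox, ← ofReal_integral_eq_lintegral_ofReal hi'.integrableOn
      (ae_of_all _ fun x => Finset.prod_nonneg fun i _ => hρ0 i _)]
    simp_rw [hind]
    rw [← ENNReal.ofReal_prod_of_nonneg fun i _ =>
      integral_nonneg fun y => Set.indicator_nonneg (fun y _ => hρ0 i y) y,
      ← integral_fintype_prod_eq_prod (fun i => (s i).indicator (ρ i)), ← integral_indicator hbox]
    congr 2 with x
    by_cases hx : x ∈ Set.univ.pi s
    · rw [Set.indicator_of_mem hx]
      exact Finset.prod_congr rfl fun i _ => (Set.indicator_of_mem (hx i trivial) _).symm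
    · rw [Set.indicator_of_notMem hx]
      obtain ⟨i, hi⟩ : ∃ i, x i ∉ s i := by simpa [Set.mem_pi] using hx
      exact (Finset.prod_eq_zero (Finset.mem_univ i) (Set.indicator_of_notMem hi _)).symm

lemma hasSqDensity_gaussianReal {δ : ℝ≥0} (hδ : δ < 1) :
    HasSqDensity (gaussianReal 0 1) (gaussianReal 0 (1 + δ)) (√(1 - (δ : ℝ) ^ 2))⁻¹ := by
  have hδ' : (δ : ℝ) < 1 := hδ
  have hδ0 : (0 : ℝ) ≤ δ := δ.2
  let u : ℝ≥0 := (1 + δ) / (1 - δ)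
  have hsub : ((1 - δ : ℝ≥0) : ℝ) = 1 - δ := NNReal.coe_sub hδ.le
  have hu : (u : ℝ) = (1 + δ) / (1 - δ) := by simp [u, hsub]
  have hu0 : u ≠ 0 := by
    rw [← NNReal.coe_ne_zero, hu]
    have : 0 < 1 - (δ : ℝ) := by linarith
    positivity
  have hw0 : (1 + δ : ℝ≥0) ≠ 0 := by positivity
  let ρ (x : ℝ) : ℝ := gaussianPDFReal 0 (1 + δ) x / gaussianPDFReal 0 1 x
  have hp (x) : 0 < gaussianPDFReal 0 1 x := gaussianPDFReal_pos 0 1 x one_ne_zero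
  have hρ : Measurable ρ :=
    (measurable_gaussianPDFReal 0 (1 + δ)).div (measurable_gaussianPDFReal 0 1)
  have hρ0 (x) : 0 ≤ ρ x := div_nonneg (gaussianPDFReal_nonneg _ _ _) (hp x).le
  have hpt (x) : gaussianPDFReal 0 1 x * ρ x ^ 2 =
      (√(1 - (δ : ℝ) ^ 2))⁻¹ * gaussianPDFReal 0 u x := by
    have h1δ : 0 < 1 - (δ : ℝ) := by linarith
    have hconst : √(1 - (δ : ℝ) ^ 2) * √(2 * Real.pi * u) * √(2 * Real.pi * (1 : ℝ≥0)) =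
        √(2 * Real.pi * (1 + δ : ℝ≥0)) ^ 2 := by
      have h1 : 0 ≤ 1 - (δ : ℝ) ^ 2 := by nlinarith
      rw [Real.sq_sqrt (by positivity), ← Real.sqrt_mul h1, ← Real.sqrt_mul (by positivity), hu]
      rw [Real.sqrt_eq_iff_mul_self_eq (by positivity) (by positivity)]
      push_cast
      field_simp
      ring
    have hexp : Real.exp (-(x - 0) ^ 2 / (2 * (1 + δ : ℝ≥0))) ^ 2 =
        Real.exp (-(x - 0) ^ 2 / (2 * u)) * Real.exp (-(x - 0) ^ 2 / (2 * (1 : ℝ≥0))) := by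
      rw [← Real.exp_add, ← Real.exp_nat_mul, hu]
      congr 1
      push_cast
      field_simp
      ring
    have hsq : gaussianPDFReal 0 (1 + δ) x ^ 2 =
        (√(1 - (δ : ℝ) ^ 2))⁻¹ * gaussianPDFReal 0 u x * gaussianPDFReal 0 1 x := by
      simp only [gaussianPDFReal]
      rw [mul_pow, hexp, inv_pow, ← hconst, mul_inv, mul_inv]
      ring
    have := (hp x).ne'
    simp only [ρ, div_pow, hsq]
    field_simp
  have hvol : gaussianReal 0 1 = volume.withDensity (gaussianPDF 0 1) :=
    gaussianReal_of_var_ne_zero 0 one_ne_zero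
  refine ⟨ρ, hρ, hρ0, ?_, ?_, ?_⟩
  · rw [hvol, integrable_withDensity_iff_integrable_smul' (measurable_gaussianPDF 0 1)
      (ae_of_all _ fun x => gaussianPDF_lt_top)]
    simp only [toReal_gaussianPDF, smul_eq_mul, hpt]
    exact (integrable_gaussianPDFReal 0 u).const_mul _
  · rw [integral_gaussianReal_eq_integral_smul one_ne_zero]
    simp only [smul_eq_mul, hpt]
    rw [integral_const_mul, integral_gaussianPDFReal_eq_one 0 hu0, mul_one]
  · rw [hvol, gaussianReal_of_var_ne_zero 0 hw0,
      ← withDensity_mul _ (measurable_gaussianPDF 0 1) hρ.ennreal_ofReal]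
    congr 1 with x
    simp only [Pi.mul_apply, gaussianPDF]
    rw [← ENNReal.ofReal_mul (hp x).le]
    congr 1
    simp only [ρ]
    field_simp [(hp x).ne']

end SquareIntegrableDensity

section Assouad

variable {Ω : Type*} [MeasurableSpace Ω] {n : ℕ}

/-- For the uniform prior on the hypercube, a bit that is hard to test costs any estimator of the
parameter an average error of at least `(1 - t) / 2` in that coordinate. -/
lemma le_sum_measureReal_bit_ne (μ : (Fin n → Bool) → Measure Ω)
    [∀ θ, IsProbabilityMeasure (μ θ)] {t : ℝ} (i : Fin n)
    (hμ : ∀ θ, θ i = false → ∀ T, MeasurableSet T →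
      (μ (Function.update θ i true)).real T - (μ θ).real T ≤ t)
    (b : Ω → Bool) (hb : Measurable b) :
    (1 - t) / 2 * 2 ^ n ≤ ∑ θ, (μ θ).real {x | b x ≠ θ i} := by
  let φ (θ : Fin n → Bool) : Fin n → Bool := Function.update θ i (!θ i)
  have hφ : Function.Involutive φ := fun θ => by simp [φ]
  have hT : MeasurableSet {x | b x = true} := hb (measurableSet_singleton true)
  have hfalse (θ : Fin n → Bool) (h : θ i = false) :
      1 - t ≤ (μ θ).real {x | b x ≠ θ i} + (μ (φ θ)).real {x | b x ≠ φ θ i} := by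
    have h1 : {x | b x ≠ θ i} = {x | b x = true} := by ext x; simp [h]
    have h2 : {x | b x ≠ φ θ i} = {x | b x = true}ᶜ := by ext x; simp [φ, h]
    have h3 := hμ θ h _ hT
    have h4 : φ θ = Function.update θ i true := by simp [φ, h]
    rw [h1, h2, probReal_compl_eq_one_sub hT, h4]
    linarith
  have hpair (θ : Fin n → Bool) :
      1 - t ≤ (μ θ).real {x | b x ≠ θ i} + (μ (φ θ)).real {x | b x ≠ φ θ i} := by
    cases h : θ i with
    | false => simpa only [h] using hfalse θ h
    | true =>
      have := hfalse (φ θ) (by simp [φ, h])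
      rw [hφ θ, add_comm] at this
      simpa only [h] using this
  have hsum := Finset.sum_le_sum fun θ (_ : θ ∈ (Finset.univ : Finset (Fin n → Bool))) => hpair θ
  have hflip := Equiv.sum_comp hφ.toPerm fun θ => (μ θ).real {x | b x ≠ θ i}
  simp only [Function.Involutive.coe_toPerm] at hflip
  rw [Finset.sum_add_distrib, hflip] at hsum
  simp only [Finset.sum_const, Finset.card_univ, Fintype.card_pi, Fintype.card_bool,
    Finset.prod_const, Fintype.card_fin, nsmul_eq_mul, Nat.cast_pow, Nat.cast_ofNat] at hsum
  linarith

lemma sum_measureReal_bit_ne_le (μ : Measure Ω) [IsProbabilityMeasure μ] {r : ℝ}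
    (θ : Fin n → Bool) (g : Ω → Fin n → Bool) (hg : Measurable g) {S : Set Ω}
    (hS : MeasurableSet S) (hSg : ∀ x ∈ S, (hammingDist (g x) θ : ℝ) ≤ r) (hr : 0 ≤ r) :
    ∑ i, μ.real {x | g x i ≠ θ i} ≤ r + n * (1 - μ.real S) := by
  have hE (i) : MeasurableSet {x | g x i ≠ θ i} :=
    ((measurable_pi_apply i).comp hg) (measurableSet_singleton (θ i)).compl
  have hsplit (i) : μ.real {x | g x i ≠ θ i} ≤
      μ.real ({x | g x i ≠ θ i} ∩ S) + (1 - μ.real S) := by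
    rw [← probReal_compl_eq_one_sub hS]
    refine (measureReal_mono fun x hx => ?_).trans (measureReal_union_le _ _)
    by_cases h : x ∈ S
    exacts [Or.inl ⟨hx, h⟩, Or.inr h]
  have hin : ∑ i, μ.real ({x | g x i ≠ θ i} ∩ S) ≤ r := by
    have hinteg (i) : Integrable (({x | g x i ≠ θ i} ∩ S).indicator (1 : Ω → ℝ)) μ :=
      (integrable_const 1).indicator ((hE i).inter hS)
    simp_rw [← fun i => integral_indicator_one (μ := μ) ((hE i).inter hS)]
    rw [← integral_finsetSum _ fun i _ => hinteg i]
    calc _ ≤ ∫ _, r ∂μ := by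
          refine integral_mono (integrable_finsetSum _ fun i _ => hinteg i)
            (integrable_const r) fun x => ?_
          by_cases h : x ∈ S
          · refine le_trans (le_of_eq ?_) (hSg x h)
            rw [hammingDist, Finset.card_filter, Nat.cast_sum]
            refine Finset.sum_congr rfl fun i _ => ?_
            by_cases hi : g x i = θ i <;> simp [Set.indicator, h, hi]
          · simpa [Set.indicator_apply, h] using hr
      _ = r := by simp
  calc _ ≤ ∑ i, (μ.real ({x | g x i ≠ θ i} ∩ S) + (1 - μ.real S)) :=
        Finset.sum_le_sum fun i _ => hsplit i
    _ ≤ _ := by rw [Finset.sum_add_distrib]; simp; linarith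

lemma exists_measurable_selection {Θ : Type*} [Finite Θ] [Nonempty Θ] [MeasurableSpace Θ]
    (S : Θ → Set Ω) (hS : ∀ θ, MeasurableSet (S θ)) :
    ∃ g : Ω → Θ, Measurable g ∧ ∀ θ, ∀ x ∈ S θ, x ∈ S (g x) := by
  classical
  let u (x : Ω) (θ : Θ) : Prop := x ∈ S θ
  have hu : Measurable u := measurable_pi_iff.2 fun θ => measurableSet_setOfPred.1 (hS θ)
  let G (p : Θ → Prop) : Θ := if h : ∃ θ, p θ then h.choose else Classical.arbitrary Θ
  refine ⟨fun x => G (u x), fun s _ => hu (Set.toFinite (G ⁻¹' s)).measurableSet,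
    fun θ x hx => ?_⟩
  have h : ∃ θ, u x θ := ⟨θ, hx⟩
  have : G (u x) = h.choose := dif_pos h
  change u x (G (u x))
  rw [this]
  exact h.choose_spec

lemma exists_measureReal_lt_two_thirds (hn : 1 ≤ n) (μ : (Fin n → Bool) → Measure Ω)
    [∀ θ, IsProbabilityMeasure (μ θ)]
    (hμ : ∀ i θ, θ i = false → ∀ T, MeasurableSet T →
      (μ (Function.update θ i true)).real T - (μ θ).real T ≤ 1 / 6)
    (S : (Fin n → Bool) → Set Ω) (hS : ∀ θ, MeasurableSet (S θ))
    (hdist : ∀ θ θ' x, x ∈ S θ → x ∈ S θ' → 24 * hammingDist θ θ' ≤ n) :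
    ∃ θ, (μ θ).real (S θ) < 2 / 3 := by
  by_contra! hlarge
  obtain ⟨g, hg, hgS⟩ := exists_measurable_selection S hS
  have hupper : ∑ θ, ∑ i, (μ θ).real {x | g x i ≠ θ i} ≤ 2 ^ n * ((3 / 8 : ℝ) * n) := by
    have : ∀ θ ∈ (Finset.univ : Finset (Fin n → Bool)),
        ∑ i, (μ θ).real {x | g x i ≠ θ i} ≤ (3 / 8 : ℝ) * n := fun θ _ => by
      have h := sum_measureReal_bit_ne_le (μ θ) (r := n / 24) θ g hg (hS θ) (fun x hx => ?_)
        (by positivity)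
      · have h2 := mul_le_mul_of_nonneg_left (hlarge θ) (Nat.cast_nonneg (α := ℝ) n)
        linarith
      · have h3 : (24 : ℝ) * hammingDist (g x) θ ≤ n := by
          exact_mod_cast hdist _ _ x (hgS θ x hx) hx
        linarith
    refine (Finset.sum_le_card_nsmul _ _ _ this).trans_eq ?_
    simp
  have hlower : n * ((1 - 1 / 6) / 2 * 2 ^ n : ℝ) ≤ ∑ θ, ∑ i, (μ θ).real {x | g x i ≠ θ i} := by
    rw [Finset.sum_comm]
    refine le_trans (le_of_eq ?_) (Finset.card_nsmul_le_sum _ _ _ fun i (_ : i ∈ Finset.univ) =>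
      le_sum_measureReal_bit_ne μ i (hμ i) (fun x => g x i) ((measurable_pi_apply i).comp hg))
    simp
  have hpos : (0 : ℝ) < n * 2 ^ n := by
    have : (0 : ℝ) < n := by exact_mod_cast hn
    positivity
  nlinarith

end Assouad

section SampleComplexity

instance isProbabilityMeasure_iidSamples {α : Type*} [MeasurableSpace α] (m : ℕ)
    (P : ProbabilityMeasure α) : IsProbabilityMeasure (iidSamples m P) := by
  unfold iidSamples; infer_instance

lemma hasSqDensity_iidSamples_gaussianProduct_update {n : ℕ} (m : ℕ) {δ : ℝ≥0} (hδ : δ < 1)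
    (θ : Fin n → Bool) (i : Fin n) (hθ : θ i = false) :
    HasSqDensity (iidSamples m (gaussianProduct fun j => bitVariance δ (θ j)))
      (iidSamples m (gaussianProduct fun j => bitVariance δ (Function.update θ i true j)))
      ((√(1 - (δ : ℝ) ^ 2))⁻¹ ^ m) := by
  have hprod : HasSqDensity
      (gaussianProduct fun j => bitVariance δ (θ j) : Measure (Fin n → ℝ))
      (gaussianProduct fun j => bitVariance δ (Function.update θ i true j))
      (∏ j, if j = i then (√(1 - (δ : ℝ) ^ 2))⁻¹ else 1) := by
    refine HasSqDensity.pi fun j => ?_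
    by_cases h : j = i
    · subst h
      simpa [hθ, bitVariance] using hasSqDensity_gaussianReal hδ
    · simpa [h] using HasSqDensity.refl (gaussianReal 0 (bitVariance δ (θ j)))
  rw [Finset.prod_ite_eq' Finset.univ i, if_pos (Finset.mem_univ i)] at hprod
  have := HasSqDensity.pi fun _ : Fin m => hprod
  simpa [iidSamples] using this

lemma inv_sqrt_pow_le {y : ℝ} (m : ℕ) (hy1 : y < 1) (hm : m * y ≤ 1 / 20) :
    (√(1 - y))⁻¹ ^ m ≤ 37 / 36 := by
  have hb : 1 - m * y ≤ (1 - y) ^ m := by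
    have := one_add_mul_le_pow (a := -y) (by linarith) m
    calc 1 - m * y = 1 + m * -y := by ring
      _ ≤ (1 + -y) ^ m := this
      _ = _ := by ring
  have hs : ((√(1 - y))⁻¹ ^ m) ^ 2 = ((1 - y) ^ m)⁻¹ := by
    rw [← pow_mul, mul_comm, pow_mul, inv_pow, Real.sq_sqrt (by linarith), inv_pow]
  refine (sq_le_sq₀ (by positivity) (by norm_num)).1 ?_
  rw [hs]
  calc ((1 - y) ^ m)⁻¹ ≤ (19 / 20 : ℝ)⁻¹ := inv_anti₀ (by norm_num) (by linarith)
    _ ≤ _ := by norm_num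

end SampleComplexity

theorem stmt_16 :
    ∃ c c' : ℝ, 0 < c ∧ 0 < c' ∧
      ∀ (n : ℕ), 1 ≤ n → ∀ (ε : ℝ), 0 < ε → ε < 1 →
        ∀ (m : ℕ) (estimator : (Fin m → Fin n → ℝ) → ProbabilityMeasure (Fin n → ℝ)),
          Measurable estimator →
          (∀ v : Fin n → ℝ≥0, (∀ i, 0 < v i) →
            (2 / 3 : ℝ≥0∞) ≤
              iidSamples m (gaussianProduct v)
                {x | dTV (gaussianProduct v) (estimator x) ≤ c * ε}) →
          c' * (n : ℝ) / ε ^ 2 ≤ (m : ℝ) := by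
  refine ⟨1 / 1000, 1 / 20, by norm_num, by norm_num, ?_⟩
  intro n hn ε hε0 hε1 m estimator hest hsucc
  by_contra! hm
  have hn1 : (1 : ℝ) ≤ n := by exact_mod_cast hn
  have hn0 : (0 : ℝ) < n := by linarith
  have hsn : 1 ≤ √(n : ℝ) := Real.one_le_sqrt.2 hn1
  let δ : ℝ≥0 := ⟨ε / √n, by positivity⟩
  have hδ : (δ : ℝ) = ε / √n := rfl
  have hδε : √(n : ℝ) * δ = ε := by rw [hδ]; field_simp
  have hδ1 : δ < 1 := by
    rw [← NNReal.coe_lt_coe, hδ, NNReal.coe_one, div_lt_one (by positivity)]; linarith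
  have hδ1' : (δ : ℝ) < 1 := hδ1
  have hδsq : (δ : ℝ) ^ 2 = ε ^ 2 / n := by rw [hδ, div_pow, Real.sq_sqrt hn0.le]
  have hδn : n * (δ : ℝ) ^ 2 ≤ 1 := by
    rw [hδsq, mul_div_cancel₀ _ hn0.ne']; exact pow_le_one₀ hε0.le hε1.le
  have hmδ : m * (δ : ℝ) ^ 2 ≤ 1 / 20 := by
    rw [lt_div_iff₀ (by positivity)] at hm
    rw [hδsq, ← mul_div_assoc, div_le_iff₀ hn0]; exact hm.le
  let P (θ : Fin n → Bool) := gaussianProduct fun i => bitVariance δ (θ i)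
  have hsep (θ θ' : Fin n → Bool) : ∃ A : Set (Fin n → ℝ), MeasurableSet A ∧
      (n < 24 * hammingDist θ θ' →
        2 * (1 / 1000 * ε) <
          |(P θ' : Measure (Fin n → ℝ)).real A - (P θ : Measure (Fin n → ℝ)).real A|) := by
    by_cases h : n < 24 * hammingDist θ θ'
    · have hle : √(n : ℝ) / 5 ≤ √(hammingDist θ θ' : ℝ) := by
        have h' : (n : ℝ) ≤ 24 * hammingDist θ θ' := by exact_mod_cast h.le
        apply Real.le_sqrt_of_sq_le
        rw [div_pow, Real.sq_sqrt hn0.le]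
        linarith
      have hlow := sqrt_hammingDist_mul_le_dTV hδ1.le hδn θ θ'
      have hlt : 2 * (1 / 1000 * ε) < dTV (P θ') (P θ) := by
        have := mul_le_mul_of_nonneg_right hle δ.2
        refine lt_of_lt_of_le ?_ hlow
        have h2 : √(n : ℝ) / 5 * δ = ε / 5 := by rw [← hδε]; ring
        change √(n : ℝ) / 5 * (δ : ℝ) ≤ √(hammingDist θ θ' : ℝ) * δ at this
        linarith
      obtain ⟨⟨A, hA⟩, hAlt⟩ := exists_lt_of_lt_ciSup hlt
      exact ⟨A, hA, fun _ => hAlt⟩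
    · exact ⟨∅, MeasurableSet.empty, fun h' => absurd h' h⟩
  choose A hA hAsep using hsep
  let S (θ : Fin n → Bool) : Set (Fin m → Fin n → ℝ) :=
    {x | ∀ q q', |(P θ : Measure (Fin n → ℝ)).real (A q q') -
      (estimator x : Measure (Fin n → ℝ)).real (A q q')| ≤ 1 / 1000 * ε}
  have hS (θ) : MeasurableSet (S θ) := by
    simp only [S, Set.ofPred_forall]
    refine MeasurableSet.iInter fun q => MeasurableSet.iInter fun q' => ?_
    have hmeas : Measurable fun x => (estimator x : Measure (Fin n → ℝ)).real (A q q') :=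
      ((Measure.measurable_coe (hA q q')).comp (measurable_subtype_coe.comp hest)).ennreal_toReal
    exact measurableSet_le (hmeas.const_sub _).abs measurable_const
  have hclose (i : Fin n) (θ : Fin n → Bool) (hθ : θ i = false) (T : Set (Fin m → Fin n → ℝ))
      (hT : MeasurableSet T) : (iidSamples m (P (Function.update θ i true))).real T -
        (iidSamples m (P θ)).real T ≤ 1 / 6 := by
    have h1 := (hasSqDensity_iidSamples_gaussianProduct_update m hδ1 θ i hθ).measureReal_sub_le
      (t := 1 / 6) (by norm_num) hT
    have h2 := inv_sqrt_pow_le m (y := (δ : ℝ) ^ 2) (by nlinarith [δ.2]) hmδ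
    refine h1.trans ?_
    generalize (√(1 - (δ : ℝ) ^ 2))⁻¹ ^ m = K at h2
    have h3 : (K - 1) / (2 * (1 / 6)) = 3 * (K - 1) := by ring
    linarith
  have hdist (θ θ' : Fin n → Bool) (x) (hx : x ∈ S θ) (hx' : x ∈ S θ') :
      24 * hammingDist θ θ' ≤ n := by
    by_contra! h
    have h1 := hAsep θ θ' h
    have h2 := abs_sub_le ((P θ' : Measure (Fin n → ℝ)).real (A θ θ'))
      ((estimator x : Measure (Fin n → ℝ)).real (A θ θ'))
      ((P θ : Measure (Fin n → ℝ)).real (A θ θ'))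
    have h3 := hx θ θ'
    rw [abs_sub_comm] at h3
    linarith [hx' θ θ']
  obtain ⟨θ, hθ⟩ :=
    exists_measureReal_lt_two_thirds hn (fun θ => iidSamples m (P θ)) hclose S hS hdist
  have h1 : (2 / 3 : ℝ≥0∞) ≤ iidSamples m (P θ) (S θ) :=
    (hsucc _ fun i => bitVariance_pos δ (θ i)).trans <| measure_mono fun x hx q q' =>
      (abs_measureReal_sub_le_dTV _ _ (hA q q')).trans hx
  have h2 := ENNReal.toReal_mono (measure_ne_top _ _) h1
  rw [← measureReal_def] at h2
  norm_num at h2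
  linarith
end
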